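/- arXiv:2411.19608 — 3 statements merged into one kernel-verified Lean document; each statement's English description precedes it below -/
import Mathlib

section
/- (Berndt–Chan evaluation, rewritten form.) One has ₂F₁(1/3, 2/3; 1; (3√3 − 5)/4) = (2√3)^{−1/4} · (√(√3 + 1) / (2π)^{3/2}) · Γ(1/4)², where Γ is the Gamma function. (The argument (3√3 − 5)/4 ≈ 0.049 lies in (0,1), so the hypergeometric series converges absolutely.) -/
open Real

/-- Gauss hypergeometric function ₂F₁ defined via its power series
    (the tsum; converges absolutely for |z| < 1). -/
noncomputable def hyp2F1 (a b c z : ℝ) : ℝ :=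
  ∑' n : ℕ, ((ascPochhammer ℝ n).eval a * (ascPochhammer ℝ n).eval b /
      (ascPochhammer ℝ n).eval c) * z ^ n / (Nat.factorial n)

theorem bc_identity (v z : ℝ) (hz : 8*z^2+20*z-1=0) :
  (z-48*v^2+128*v^3)^2*(z - v*(3-4*v)^2) = (z-3*v+48*v^2-64*v^3)*((z-3*v+48*v^2-64*v^3)^2 - 27*(1+8*z)*v^2) := by
  linear_combination 54*v^3*hz

noncomputable def bcb (n : ℕ) : ℝ := (ascPochhammer ℝ n).eval (1/3) * (ascPochhammer ℝ n).eval (2/3) / ((ascPochhammer ℝ n).eval (1/2) * (n.factorial : ℝ))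

theorem bcb_zero : bcb 0 = 1 := by simp [bcb]

theorem bcb_pos (n : ℕ) : 0 < bcb n := by
  unfold bcb
  have h1 := ascPochhammer_pos n (1/3:ℝ) (by norm_num)
  have h2 := ascPochhammer_pos n (2/3:ℝ) (by norm_num)
  have h3 := ascPochhammer_pos n (1/2:ℝ) (by norm_num)
  positivity

theorem bcb_succ (n : ℕ) : bcb (n+1) * (((n:ℝ)+1/2)*(n+1)) = bcb n * ((n+1/3)*(n+2/3)) := by
  unfold bcb
  have h3 := (ascPochhammer_pos n (1/2:ℝ) (by norm_num)).ne'
  have h4 : (1/2 + (n:ℝ)) ≠ 0 := by positivity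
  rw [ascPochhammer_succ_eval, ascPochhammer_succ_eval, ascPochhammer_succ_eval, Nat.factorial_succ]
  push_cast
  have h5 : (n.factorial : ℝ) ≠ 0 := by positivity
  have h6 : ((n:ℝ)+1) ≠ 0 := by positivity
  field_simp
  ring

theorem bcb_le (n : ℕ) : bcb n ≤ 1 := by
  induction n with
  | zero => rw [bcb_zero]
  | succ n ih =>
    have h := bcb_succ n
    have hp := bcb_pos n
    have h2 : bcb (n+1) * (((n:ℝ)+1/2)*(n+1)) ≤ 1 * (((n:ℝ)+1/2)*(n+1)) := by
      rw [h]
      have hn : (0:ℝ) ≤ n := by positivity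
      have h3 : (((n:ℝ)+1/3)*(n+2/3)) ≤ (((n:ℝ)+1/2)*(n+1)) := by nlinarith
      calc _ ≤ 1 * ((n+1/3)*(n+2/3) : ℝ) := by gcongr
        _ ≤ _ := by linarith
    exact le_of_mul_le_mul_right h2 (by positivity)

theorem half_poch (n : ℕ) : (ascPochhammer ℝ n).eval (1/2) / (n.factorial : ℝ) = ∏ i ∈ Finset.range n, (2 * (i : ℝ) + 1) / (2 * i + 2) := by
  induction n with
  | zero => simp
  | succ n ih =>
    rw [Finset.prod_range_succ, ← ih, ascPochhammer_succ_eval, Nat.factorial_succ]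
    push_cast
    have h5 : (n.factorial : ℝ) ≠ 0 := by positivity
    field_simp
    ring

theorem cos_int (n : ℕ) : ∫ x in (0:ℝ)..π/2, cos x ^ (2*n) = π/2 * ((ascPochhammer ℝ n).eval (1/2) / (n.factorial : ℝ)) := by
  rw [EulerSine.integral_cos_pow_eq, integral_sin_pow_even, half_poch]; ring

noncomputable def bcg (s : ℝ) : ℝ := ∑' n, bcb n * s^(2*n)
noncomputable def bcW (s : ℝ) : ℝ := ∑' n, bcb n * s^(2*n+1) / (3*(2*n+1))
noncomputable def bcg' (s : ℝ) : ℝ := ∑' n, bcb n * (2*n*s^(2*n-1))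

theorem pow_bound (s : ℝ) (hs : s ∈ Set.Ioo (-1/2:ℝ) (1/2)) (n : ℕ) : |s^n| ≤ (1/2)^n := by
  rw [abs_pow]
  exact pow_le_pow_left₀ (abs_nonneg _) (abs_le.2 ⟨by linarith [hs.1], hs.2.le⟩) _

theorem sum4 : Summable (fun n : ℕ => (1/2:ℝ)^(2*n)) := by
  simp_rw [pow_mul]
  exact summable_geometric_of_lt_one (by norm_num) (by norm_num)

theorem sumg (s : ℝ) (hs : s ∈ Set.Ioo (-1/2:ℝ) (1/2)) : Summable (fun n => bcb n * s^(2*n)) := by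
  refine Summable.of_norm_bounded sum4 fun n => ?_
  rw [norm_mul, Real.norm_eq_abs, Real.norm_eq_abs, abs_of_pos (bcb_pos n)]
  calc _ ≤ 1 * (1/2:ℝ)^(2*n) := mul_le_mul (bcb_le n) (pow_bound s hs _) (abs_nonneg _) (by norm_num)
    _ = _ := one_mul _

theorem sumW (s : ℝ) (hs : s ∈ Set.Ioo (-1/2:ℝ) (1/2)) : Summable (fun n => bcb n * s^(2*n+1) / (3*(2*n+1))) := by
  refine Summable.of_norm_bounded (sumg s hs).norm fun n => ?_
  rw [norm_div, pow_succ, ← mul_assoc, norm_mul _ s]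
  apply div_le_of_le_mul₀ (norm_nonneg _) (norm_nonneg _)
  apply mul_le_mul_of_nonneg_left _ (norm_nonneg _)
  rw [Real.norm_eq_abs, Real.norm_eq_abs, abs_of_pos (show (0:ℝ) < 3*(2*n+1) by positivity)]
  have : |s| ≤ 1/2 := abs_le.2 ⟨by linarith [hs.1], hs.2.le⟩
  have hn : (0:ℝ) ≤ n := by positivity
  linarith

theorem sumbd : Summable (fun n : ℕ => 4*((n:ℝ) * (1/4:ℝ)^n)) := by
  have := summable_pow_mul_geometric_of_norm_lt_one (R := ℝ) 1 (r := 1/4) (by norm_num)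
  simpa using this.mul_left 4

theorem bd' (s : ℝ) (hs : s ∈ Set.Ioo (-1/2:ℝ) (1/2)) (n : ℕ) : ‖bcb n * (2*n*s^(2*n-1))‖ ≤ 4*((n:ℝ) * (1/4:ℝ)^n) := by
  rcases n with _ | n
  · simp
  rw [norm_mul, norm_mul, Real.norm_eq_abs, Real.norm_eq_abs, Real.norm_eq_abs, abs_of_pos (bcb_pos _)]
  have h := pow_bound s hs (2*(n+1)-1)
  have e : 2*(n+1)-1 = 2*n+1 := by omega
  rw [e] at h ⊢
  rw [abs_of_pos (by positivity)]
  calc _ ≤ 1 * (2 * ((n+1:ℕ):ℝ) * (1/2:ℝ)^(2*n+1)) := by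
        apply mul_le_mul (bcb_le _) _ (by positivity) (by norm_num)
        gcongr
    _ = _ := by rw [pow_succ, pow_mul, pow_succ]; ring_nf

theorem sumg' (s : ℝ) (hs : s ∈ Set.Ioo (-1/2:ℝ) (1/2)) : Summable (fun n : ℕ => bcb n * (2*n*s^(2*n-1))) :=
  Summable.of_norm_bounded sumbd (bd' s hs)

theorem hasDeriv_g (s : ℝ) (hs : s ∈ Set.Ioo (-1/2:ℝ) (1/2)) : HasDerivAt bcg (bcg' s) s := by
  refine hasDerivAt_tsum_of_isPreconnected (g := fun n y => bcb n * y^(2*n)) (g' := fun (n : ℕ) (y : ℝ) => bcb n * (2*(n:ℝ)*y^(2*n-1))) (t := Set.Ioo (-1/2:ℝ) (1/2)) (y₀ := s) sumbd isOpen_Ioo isPreconnected_Ioo (fun n y _ => ?_) ?_ hs (sumg s hs) hs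
  · have := (hasDerivAt_pow (2*n) y).const_mul (bcb n)
    simpa using this
  · intro n y hy
    exact bd' y hy n

theorem hasDeriv_W (s : ℝ) (hs : s ∈ Set.Ioo (-1/2:ℝ) (1/2)) : HasDerivAt bcW (bcg s / 3) s := by
  have e : bcg s / 3 = ∑' n, bcb n * s^(2*n) / 3 := by rw [bcg, tsum_div_const]
  rw [e]
  refine hasDerivAt_tsum_of_isPreconnected (t := Set.Ioo (-1/2:ℝ) (1/2)) (y₀ := s) (g := fun (n:ℕ) (y:ℝ) => bcb n * y^(2*n+1) / (3*(2*(n:ℝ)+1))) (g' := fun (n : ℕ) (y : ℝ) => bcb n * y^(2*n) / 3) (u := fun n : ℕ => (1/2:ℝ)^(2*n)) sum4 isOpen_Ioo isPreconnected_Ioo (fun n y _ => ?_) (fun n y hy => ?_) hs (sumW s hs) hs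
  · have := ((hasDerivAt_pow (2*n+1) y).const_mul (bcb n)).div_const (3*(2*(n:ℝ)+1))
    convert! this using 1
    push_cast
    have : (2*(n:ℝ)+1) ≠ 0 := by positivity
    field_simp
  · rw [norm_div, norm_mul, Real.norm_eq_abs, Real.norm_eq_abs, abs_of_pos (bcb_pos n)]
    have : bcb n * |y^(2*n)| ≤ 1 * (1/2:ℝ)^(2*n) := mul_le_mul (bcb_le n) (pow_bound y hy _) (abs_nonneg _) (by norm_num)
    have h0 : 0 ≤ bcb n * |y^(2*n)| := mul_nonneg (bcb_pos n).le (abs_nonneg _)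
    rw [Real.norm_of_nonneg (by norm_num : (0:ℝ) ≤ 3)]
    linarith

theorem ode (s : ℝ) (hs : s ∈ Set.Ioo (-1/2:ℝ) (1/2)) : (1-s^2) * bcg' s - s * bcg s + bcW s / 3 = 0 := by
  -- split
  have h1 : bcg' s = ∑' n : ℕ, bcb (n+1) * (2*(n+1)*s^(2*n+1)) := by
    rw [bcg', (sumg' s hs).tsum_eq_zero_add]
    simp only [Nat.cast_zero, mul_zero, zero_mul, zero_add]
    apply tsum_congr; intro n
    push_cast
    have e : 2*(n+1)-1 = 2*n+1 := by omega
    rw [e]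
  have s1 : Summable (fun n : ℕ => bcb (n+1) * (2*(n+1)*s^(2*n+1))) := by
    have := (summable_nat_add_iff 1).2 (sumg' s hs)
    refine this.congr fun n => ?_
    have e : 2*(n+1)-1 = 2*n+1 := by omega
    rw [e]; push_cast; ring
  have s2 := (sumg' s hs).mul_left (s^2)
  have s3 := (sumg s hs).mul_left s
  have s4 := (sumW s hs).div_const 3
  have : (1-s^2) * bcg' s - s * bcg s + bcW s / 3 = bcg' s - s^2 * bcg' s - s * bcg s + bcW s / 3 := by ring
  rw [this]
  nth_rewrite 1 [h1]
  unfold bcg' bcg bcW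
  rw [← tsum_mul_left, ← tsum_mul_left, ← tsum_div_const, ← s1.tsum_sub s2, ← (s1.sub s2).tsum_sub s3, ← ((s1.sub s2).sub s3).tsum_add s4]
  refine (tsum_congr (g := fun _ => (0:ℝ)) ?_).trans tsum_zero
  intro n
  have e : s^2 * (bcb n * (2*n*s^(2*n-1))) = bcb n * (2*n) * s^(2*n+1) := by
    rcases n with _ | n
    · simp
    · have e : 2*(n+1)-1 = 2*n+1 := by omega
      rw [e]; ring
  rw [e]
  have h := bcb_succ n
  have h6 : (2*(n:ℝ)+1) ≠ 0 := by positivity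
  have h7 : bcb (n+1) * (2*(n+1)) = bcb n * (((n:ℝ)+1/3)*(n+2/3)) * 4 / (2*n+1) := by
    rw [← h]; field_simp; ring
  calc _ = (bcb (n+1) * (2*(n+1))) * s^(2*n+1) - bcb n * (2*n) * s^(2*n+1) - s * (bcb n * s^(2*n)) + bcb n * s^(2*n+1) / (3*(2*n+1)) / 3 := by ring
    _ = 0 := by rw [h7]; field_simp; ring

theorem g_closed (s : ℝ) (hs : s ∈ Set.Ioo (-1/2:ℝ) (1/2)) : bcg s = cos (arcsin s / 3) / √(1-s^2) := by
  set p : ℝ → ℝ := fun s => bcW s * sin (arcsin s / 3) + √(1-s^2) * bcg s * cos (arcsin s / 3) with hp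
  set q : ℝ → ℝ := fun s => bcW s * cos (arcsin s / 3) - √(1-s^2) * bcg s * sin (arcsin s / 3) with hq
  have key : ∀ x ∈ Set.Ioo (-1/2:ℝ) (1/2), HasDerivAt p 0 x ∧ HasDerivAt q 0 x := by
    intro x hx
    have hpos : 0 < 1 - x^2 := by nlinarith [hx.1, hx.2]
    have hR := Real.sqrt_pos.2 hpos
    have hR2 := Real.sq_sqrt hpos.le
    have dA : HasDerivAt (fun s => arcsin s / 3) (1/√(1-x^2)/3) x :=
      (Real.hasDerivAt_arcsin (by linarith [hx.1]) (by linarith [hx.2])).div_const 3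
    have dR : HasDerivAt (fun s : ℝ => √(1-s^2)) (-(2*x)/(2*√(1-x^2))) x := by
      have : HasDerivAt (fun s : ℝ => 1 - s^2) (-(2*x)) x := by
        simpa using (hasDerivAt_pow 2 x).const_sub 1
      exact this.sqrt hpos.ne'
    have dW := hasDeriv_W x hx
    have dg := hasDeriv_g x hx
    have o := ode x hx
    constructor
    · convert! (dW.mul dA.sin).add ((dR.mul dg).mul dA.cos) using 1
      simp only [Pi.mul_apply]
      field_simp
      rw [hR2]
      linear_combination (-cos (arcsin x / 3)) * 3 * o
    · convert! (dW.mul dA.cos).sub ((dR.mul dg).mul dA.sin) using 1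
      simp only [Pi.mul_apply]
      field_simp
      rw [hR2]
      linear_combination (sin (arcsin x / 3)) * 3 * o
  have h0 : (0:ℝ) ∈ Set.Ioo (-1/2:ℝ) (1/2) := by constructor <;> norm_num
  have hW0 : bcW 0 = 0 := by simp [bcW]
  have hg0 : bcg 0 = 1 := by
    rw [bcg, tsum_eq_single 0]
    · simp [bcb_zero]
    · intro n hn; simp [hn]
  have hpc : p s = 1 := by
    rw [isOpen_Ioo.is_const_of_deriv_eq_zero isPreconnected_Ioo (fun x hx => (key x hx).1.differentiableAt.differentiableWithinAt) (fun x hx => (key x hx).1.deriv) hs h0]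
    simp [hp, hW0, hg0]
  have hqc : q s = 0 := by
    rw [isOpen_Ioo.is_const_of_deriv_eq_zero isPreconnected_Ioo (fun x hx => (key x hx).2.differentiableAt.differentiableWithinAt) (fun x hx => (key x hx).2.deriv) hs h0]
    simp [hq, hW0]
  have hpos : 0 < 1 - s^2 := by nlinarith [hs.1, hs.2]
  have hR := Real.sqrt_pos.2 hpos
  rw [eq_div_iff hR.ne']
  simp only [hp] at hpc
  simp only [hq] at hqc
  have := sin_sq_add_cos_sq (arcsin s / 3)
  linear_combination cos (arcsin s/3) * hpc - sin (arcsin s/3) * hqc - (√(1-s^2) * bcg s) * this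

noncomputable def bcL (t : ℝ) : ℝ := ∫ ψ in (0:ℝ)..arcsin t, 1 / √(1 + sin ψ ^ 2)

theorem bcL_cont_int : Continuous (fun ψ : ℝ => 1 / √(1 + sin ψ ^ 2)) := by
  refine continuous_const.div (by fun_prop) fun x => ?_
  have : 0 < 1 + sin x ^ 2 := by positivity
  exact (Real.sqrt_pos.2 this).ne'

theorem bcL_cont : Continuous bcL :=
  (intervalIntegral.continuous_primitive (fun a b => bcL_cont_int.intervalIntegrable a b) 0).comp continuous_arcsin

theorem bcL_deriv (t : ℝ) (h1 : -1 < t) (h2 : t < 1) : HasDerivAt bcL (1 / √(1 - t^4)) t := by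
  have hA := Real.hasDerivAt_arcsin h1.ne' h2.ne
  have hI := intervalIntegral.integral_hasDerivAt_right (bcL_cont_int.intervalIntegrable 0 (arcsin t)) (bcL_cont_int.stronglyMeasurableAtFilter _ _) bcL_cont_int.continuousAt
  have := hI.comp t hA
  convert! this using 1
  rw [Real.sin_arcsin h1.le h2.le, div_mul_div_comm, ← Real.sqrt_mul (by positivity)]
  ring_nf

theorem bcL_zero : bcL 0 = 0 := by simp [bcL]

theorem bcL_one : bcL 1 = Real.Gamma (1/4) ^ 2 / (4 * √(2*π)) := by
  have hconv := Complex.betaIntegral_convergent (u := ((1/4:ℝ):ℂ)) (v := ((1/2:ℝ):ℂ)) (by rw [Complex.ofReal_re]; norm_num) (by rw [Complex.ofReal_re]; norm_num)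
  have hbeta := Complex.Gamma_mul_Gamma_eq_betaIntegral (s := ((1/4:ℝ):ℂ)) (t := ((1/2:ℝ):ℂ)) (by rw [Complex.ofReal_re]; norm_num) (by rw [Complex.ofReal_re]; norm_num)
  have hE : ∀ x ∈ Set.Ioo (0:ℝ) 1, (x : ℂ) ^ (((1/4:ℝ):ℂ) - 1) * (1 - (x : ℂ)) ^ (((1/2:ℝ):ℂ) - 1) = ((x ^ ((1/4:ℝ)-1) * (1-x)^((1/2:ℝ)-1) : ℝ) : ℂ) := by
    intro x hx
    rw [Complex.ofReal_mul, Complex.ofReal_cpow hx.1.le, Complex.ofReal_cpow (by linarith [hx.2])]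
    push_cast; rfl
  have hderiv : ∀ x ∈ Set.Ioo (0:ℝ) 1, HasDerivAt (fun x : ℝ => ((4 * bcL (x ^ (1/4:ℝ)) : ℝ) : ℂ)) ((x : ℂ) ^ (((1/4:ℝ):ℂ) - 1) * (1 - (x : ℂ)) ^ (((1/2:ℝ):ℂ) - 1)) x := by
    intro x hx
    rw [hE x hx]
    apply HasDerivAt.ofReal_comp
    have hx1 : x ^ (1/4:ℝ) < 1 := Real.rpow_lt_one hx.1.le hx.2 (by norm_num)
    have hx0 : 0 < x ^ (1/4:ℝ) := Real.rpow_pos_of_pos hx.1 _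
    have d1 := Real.hasDerivAt_rpow_const (x := x) (p := 1/4) (Or.inl hx.1.ne')
    have d2 := ((bcL_deriv _ (by linarith) hx1).comp x d1).const_mul 4
    convert! d2 using 1
    have : (x ^ (1/4:ℝ))^4 = x := by
      rw [← Real.rpow_natCast, ← Real.rpow_mul hx.1.le]; norm_num
    rw [this, show (1/2:ℝ)-1 = -(1/2) by norm_num, Real.rpow_neg (by linarith [hx.2]), Real.sqrt_eq_rpow]
    ring
  have hcont : ContinuousOn (fun x : ℝ => ((4 * bcL (x ^ (1/4:ℝ)) : ℝ) : ℂ)) (Set.Icc 0 1) := by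
    apply Continuous.continuousOn
    apply Complex.continuous_ofReal.comp
    apply continuous_const.mul
    apply bcL_cont.comp
    exact Real.continuous_rpow_const (by norm_num)
  have hFTC := intervalIntegral.integral_eq_sub_of_hasDerivAt_of_le (by norm_num) hcont hderiv hconv
  have hb : Complex.betaIntegral ((1/4:ℝ):ℂ) ((1/2:ℝ):ℂ) = ((4 * bcL 1 : ℝ):ℂ) := by
    rw [Complex.betaIntegral, hFTC]
    simp [bcL_zero]
  rw [hb, ← Complex.ofReal_add, Complex.Gamma_ofReal, Complex.Gamma_ofReal, Complex.Gamma_ofReal] at hbeta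
  norm_cast at hbeta
  rw [Real.Gamma_one_half_eq, show (1/4+1/2:ℝ) = 1 - 1/4 by norm_num] at hbeta
  have hrefl := Real.Gamma_mul_Gamma_one_sub (1/4)
  rw [show π * (1/4) = π/4 by ring, Real.sin_pi_div_four] at hrefl
  have hG := Real.Gamma_pos_of_pos (show (0:ℝ) < 1/4 by norm_num)
  have h2 : √2 ≠ 0 := by positivity
  have hpi : √π ≠ 0 := by positivity
  have hpi2 : √π ^2 = π := Real.sq_sqrt pi_pos.le
  have h22 : √2 ^2 = 2 := Real.sq_sqrt (by norm_num)
  rw [Real.sqrt_mul (by norm_num), eq_div_iff (by positivity)]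
  set A := Real.Gamma (1/4)
  set B := Real.Gamma (1-1/4)
  have hr2 : A * B = π * √2 := by rw [hrefl]; field_simp; linear_combination -h22
  have h3 : A^2 * √π = π * √2 * (4 * bcL 1) := by rw [← hr2]; linear_combination A * hbeta
  apply mul_right_cancel₀ hpi
  rw [h3]
  linear_combination (bcL 1 * 4 * √2) * hpi2

theorem w_facts (z s : ℝ) (hz0 : 0 < z) (hz1 : z < 1/20) (hs : 0 ≤ s) (hsz : s^2 ≤ z) :
    0 ≤ sin (arcsin s / 3) ∧ sin (arcsin s / 3)^2 ≤ z/8 ∧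
    s = 3 * sin (arcsin s / 3) - 4 * sin (arcsin s / 3)^3 := by
  have hs1 : s ≤ 1 := by nlinarith
  have hA0 : 0 ≤ arcsin s := arcsin_nonneg.2 hs
  have hA1 : arcsin s ≤ π/2 := arcsin_le_pi_div_two s
  have hpi := pi_pos
  have e : s = 3 * sin (arcsin s / 3) - 4 * sin (arcsin s / 3)^3 := by
    rw [← sin_three_mul, show 3 * (arcsin s / 3) = arcsin s by ring, sin_arcsin (by linarith) hs1]
  have h0 : 0 ≤ sin (arcsin s / 3) := sin_nonneg_of_nonneg_of_le_pi (by linarith) (by linarith)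
  have h1 : sin (arcsin s / 3) ≤ 1/2 := by
    rw [← sin_pi_div_six]
    exact sin_le_sin_of_le_of_le_pi_div_two (by linarith) (by linarith) (by linarith)
  refine ⟨h0, ?_, e⟩
  set w := sin (arcsin s / 3)
  have hv : w^2 ≤ 1/4 := by nlinarith
  have e2 : s^2 = w^2 * (3-4*w^2)^2 := by rw [e]; ring
  have hv2 : w^2 * 4 ≤ z := by
    have : (4:ℝ) ≤ (3-4*w^2)^2 := by nlinarith
    nlinarith [mul_le_mul_of_nonneg_left this (sq_nonneg w)]
  have : (8:ℝ) ≤ (3-4*w^2)^2 := by nlinarith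
  nlinarith [mul_le_mul_of_nonneg_left this (sq_nonneg w)]

theorem P_facts (z v : ℝ) (hz0 : 0 < z) (hz1 : z < 1/20) (hv : 0 ≤ v) (hvz : v ≤ z/8) :
    0 < z-3*v+48*v^2-64*v^3 ∧ 0 < z-48*v^2+128*v^3 := by
  have h3 : v^3 ≤ v^2 * (1/160) := by
    have : v ≤ 1/160 := by linarith
    nlinarith [mul_le_mul_of_nonneg_left this (sq_nonneg v)]
  have h3' : 0 ≤ v^3 := by positivity
  have h2 : v^2 ≤ v * (1/160) := by nlinarith
  have h2' := sq_nonneg v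
  constructor <;> nlinarith

noncomputable def bcT (z D w : ℝ) : ℝ := 6 * √D * w / √(z-3*w^2+48*w^4-64*w^6)

theorem bcT_deriv (z D w : ℝ) (hP : 0 < z-3*w^2+48*w^4-64*w^6) :
    HasDerivAt (bcT z D) (6 * √D * (z-48*w^4+128*w^6) / ((z-3*w^2+48*w^4-64*w^6) * √(z-3*w^2+48*w^4-64*w^6))) w := by
  have hR := Real.sqrt_pos.2 hP
  have hR2 := Real.sq_sqrt hP.le
  have d1 : HasDerivAt (fun w : ℝ => z-3*w^2+48*w^4-64*w^6) (-(3*(2*w))+48*(4*w^3)-64*(6*w^5)) w := by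
    have a2 := (hasDerivAt_pow 2 w).const_mul 3
    have a4 := (hasDerivAt_pow 4 w).const_mul 48
    have a6 := (hasDerivAt_pow 6 w).const_mul 64
    have := (((hasDerivAt_const w z).sub a2).add a4).sub a6
    convert! this using 1
    norm_num
  have d2 : HasDerivAt (fun w : ℝ => 6 * √D * w) (6*√D) w := by
    simpa using (hasDerivAt_id w).const_mul (6*√D)
  have := d2.div (d1.sqrt hP.ne') hR.ne'
  convert! this using 1
  have key : ∀ P S : ℝ, 0 < P → 0 < S → S^2 = P → P = z-3*w^2+48*w^4-64*w^6 →
      6 * √D * (z-48*w^4+128*w^6) / (P * S) = (6 * √D * S - 6 * √D * w * ((-(3*(2*w))+48*(4*w^3)-64*(6*w^5)) / (2 * S))) / S^2 := by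
    intro P S hP0 hS0 hS hPe
    subst hS
    field_simp
    rw [hPe]
    ring
  exact key _ _ hP hR hR2 rfl

theorem G_deriv_alg (z D s w : ℝ) (hz : 8*z^2+20*z-1=0) (hz0 : 0 < z) (hz1 : z < 1/20) (hD0 : 0 < D) (hD : 1296*D^2=27*(1+8*z))
    (hw0 : 0 ≤ w) (hwz : w^2 ≤ z/8) (hs : s = 3*w-4*w^3) (hsz : s^2 < z) :
    0 < z-3*w^2+48*w^4-64*w^6 ∧ 0 ≤ bcT z D w ∧ bcT z D w < 1 ∧
    1 / √(1 - (bcT z D w)^4) * (6 * √D * (z-48*w^4+128*w^6) / ((z-3*w^2+48*w^4-64*w^6) * √(z-3*w^2+48*w^4-64*w^6))) * √(z-s^2) = 6 * √D := by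
  obtain ⟨hP, hQ⟩ := P_facts z (w^2) hz0 hz1 (sq_nonneg w) hwz
  have id := bc_identity (w^2) z hz
  rw [← hD] at id
  have e1 : z-3*w^2+48*w^4-64*w^6 = z - 3*w^2+48*(w^2)^2-64*(w^2)^3 := by ring
  have e2 : z-48*w^4+128*w^6 = z-48*(w^2)^2+128*(w^2)^3 := by ring
  have e3 : z - s^2 = z - w^2*(3-4*w^2)^2 := by rw [hs]; ring
  have hzs : 0 < z - s^2 := by linarith
  rw [← e1] at hP
  rw [← e2] at hQ
  rw [← e1, ← e2, ← e3] at id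
  have hT4 : bcT z D w ^ 4 = 1296*D^2*(w^2)^2 / (z-3*w^2+48*w^4-64*w^6)^2 := by
    unfold bcT
    have a : √D^4 = D^2 := by rw [show √D^4 = (√D^2)^2 by ring, Real.sq_sqrt hD0.le]
    have b : √(z-3*w^2+48*w^4-64*w^6)^4 = (z-3*w^2+48*w^4-64*w^6)^2 := by
      rw [show ∀ x:ℝ, x^4 = (x^2)^2 by intro x; ring, Real.sq_sqrt hP.le]
    rw [div_pow, mul_pow, mul_pow, a, b]; ring
  set P := z-3*w^2+48*w^4-64*w^6 with hPdef
  set Q := z-48*w^4+128*w^6 with hQdef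
  have hone : 1 - bcT z D w ^ 4 = Q^2*(z-s^2)/P^3 := by
    rw [hT4]; field_simp; linear_combination -id
  have hT0 : 0 ≤ bcT z D w := by unfold bcT; positivity
  have hT1 : 0 < 1 - bcT z D w ^ 4 := by rw [hone]; positivity
  refine ⟨hP, hT0, ?_, ?_⟩
  · by_contra h
    push Not at h
    have := one_le_pow₀ h (n := 4)
    linarith
  · have hsq : √(1 - bcT z D w ^ 4) = Q * √(z-s^2) / (P * √P) := by
      rw [hone, show Q^2*(z-s^2)/P^3 = (Q * √(z-s^2) / (P * √P))^2 by
        rw [div_pow, mul_pow, mul_pow, Real.sq_sqrt hzs.le, Real.sq_sqrt hP.le]; ring]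
      exact Real.sqrt_sq (by positivity)
    rw [hsq]
    have := Real.sqrt_pos.2 hzs
    have := Real.sqrt_pos.2 hP
    have := Real.sqrt_pos.2 hD0
    field_simp

theorem bcT_end (z D s w : ℝ) (hz : 8*z^2+20*z-1=0) (hz0 : 0 < z) (hz1 : z < 1/20) (hD0 : 0 < D) (hD : 1296*D^2=27*(1+8*z))
    (hw0 : 0 ≤ w) (hwz : w^2 ≤ z/8) (hs : s = 3*w-4*w^3) (hsz : s^2 = z) : bcT z D w = 1 := by
  obtain ⟨hP, hQ⟩ := P_facts z (w^2) hz0 hz1 (sq_nonneg w) hwz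
  have id := bc_identity (w^2) z hz
  rw [← hD] at id
  have e1 : z-3*w^2+48*w^4-64*w^6 = z - 3*w^2+48*(w^2)^2-64*(w^2)^3 := by ring
  have e3 : z - w^2*(3-4*w^2)^2 = 0 := by rw [← hsz, hs]; ring
  rw [e3, mul_zero] at id
  have h := (mul_eq_zero.1 id.symm).resolve_left hP.ne'
  rw [← e1] at h hP
  unfold bcT
  set P := z-3*w^2+48*w^4-64*w^6 with hPdef
  have h2 : P = 36 * D * w^2 := by
    have : P^2 = (36*D*w^2)^2 := by linear_combination h
    exact (sq_eq_sq₀ hP.le (by positivity)).1 this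
  have h3 : √P = 6 * √D * w := by
    rw [h2, show 36 * D * w^2 = (6 * √D * w)^2 by rw [mul_pow, mul_pow, Real.sq_sqrt hD0.le]; ring]
    exact Real.sqrt_sq (by positivity)
  rw [← h3, div_self (Real.sqrt_pos.2 hP).ne']

theorem int_g (z D : ℝ) (hz : 8*z^2+20*z-1=0) (hz0 : 0 < z) (hz1 : z < 1/20) (hD0 : 0 < D) (hD : 1296*D^2=27*(1+8*z)) :
    ∫ θ in (0:ℝ)..π/2, bcg (√z * cos θ) = bcL 1 / (2 * √D) := by
  have hσ0 : 0 < √z := Real.sqrt_pos.2 hz0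
  have hσ2 := Real.sq_sqrt hz0.le
  have hpi := pi_pos
  have hmem : ∀ θ, √z * cos θ ∈ Set.Ioo (-1/2:ℝ) (1/2) := by
    intro θ
    have h1 : √z < 1/2 := by rw [Real.sqrt_lt' (by norm_num)]; linarith
    have : |√z * cos θ| < 1/2 := by
      rw [abs_mul, abs_of_pos hσ0]
      have := abs_cos_le_one θ
      nlinarith
    have := abs_lt.1 this
    exact ⟨by linarith [this.1], this.2⟩
  have hcg : Continuous (fun θ => bcg (√z * cos θ)) := by
    rw [continuous_iff_continuousAt]
    intro θ
    exact ContinuousAt.comp (f := fun θ => √z * cos θ) (hasDeriv_g _ (hmem θ)).continuousAt (by fun_prop)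
  have hsq : ∀ θ, (√z * cos θ)^2 ≤ z := by
    intro θ
    rw [mul_pow, hσ2]
    nlinarith [cos_sq_le_one θ]
  have hcos : ∀ θ ∈ Set.Icc (0:ℝ) (π/2), 0 ≤ √z * cos θ := fun θ hθ =>
    mul_nonneg hσ0.le (cos_nonneg_of_mem_Icc ⟨by linarith [hθ.1], hθ.2⟩)
  have hFTC := intervalIntegral.integral_eq_sub_of_hasDerivAt_of_le (a := 0) (b := π/2)
    (f := fun θ => bcL (bcT z D (sin (arcsin (√z * cos θ) / 3)))) (f' := fun θ => -(2*√D) * bcg (√z * cos θ)) (by linarith) ?_ ?_ ((continuous_const.mul hcg).intervalIntegrable _ _)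
  · rw [intervalIntegral.integral_const_mul] at hFTC
    have hE1 : bcT z D (sin (arcsin (√z * cos 0) / 3)) = 1 := by
      rw [cos_zero, mul_one]
      obtain ⟨a, b, c⟩ := w_facts z (√z) hz0 hz1 hσ0.le hσ2.le
      exact bcT_end z D _ _ hz hz0 hz1 hD0 hD a b c hσ2
    have hE2 : bcT z D (sin (arcsin (√z * cos (π/2)) / 3)) = 0 := by simp [bcT]
    simp only [hE1, hE2, bcL_zero] at hFTC
    have := Real.sqrt_pos.2 hD0
    rw [eq_div_iff (by positivity)]
    linarith
  · intro θ hθ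
    obtain ⟨a, b, c⟩ := w_facts z (√z * cos θ) hz0 hz1 (hcos θ hθ) (hsq θ)
    obtain ⟨hP, -⟩ := P_facts z (sin (arcsin (√z * cos θ) / 3)^2) hz0 hz1 (sq_nonneg _) b
    have hP' : 0 < z-3*sin (arcsin (√z * cos θ) / 3)^2+48*sin (arcsin (√z * cos θ) / 3)^4-64*sin (arcsin (√z * cos θ) / 3)^6 := by
      convert! hP using 1; ring
    apply ContinuousAt.continuousWithinAt
    apply ContinuousAt.comp (g := bcL) bcL_cont.continuousAt
    exact ContinuousAt.comp (f := fun θ => sin (arcsin (√z * cos θ) / 3)) (bcT_deriv z D _ hP').continuousAt (by fun_prop)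
  · intro θ hθ
    have hs := hcos θ ⟨hθ.1.le, hθ.2.le⟩
    have hsin : 0 < sin θ := sin_pos_of_pos_of_lt_pi hθ.1 (by linarith [hθ.2])
    have hzs : z - (√z * cos θ)^2 = (√z * sin θ)^2 := by
      rw [mul_pow, mul_pow, hσ2]; linear_combination (-z) * sin_sq_add_cos_sq θ
    have hlt : (√z * cos θ)^2 < z := by
      have : 0 < (√z * sin θ)^2 := by positivity
      linarith
    obtain ⟨a, b, c⟩ := w_facts z (√z * cos θ) hz0 hz1 hs (hsq θ)
    obtain ⟨hP, hT0, hT1, hA⟩ := G_deriv_alg z D _ _ hz hz0 hz1 hD0 hD a b c hlt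
    have hm := hmem θ
    have dS : HasDerivAt (fun θ => √z * cos θ) (√z * -sin θ) θ := (hasDerivAt_cos θ).const_mul _
    have dA : HasDerivAt (fun θ => arcsin (√z * cos θ) / 3) (1/√(1-(√z * cos θ)^2) * (√z * -sin θ)/3) θ :=
      (HasDerivAt.comp θ (Real.hasDerivAt_arcsin (by linarith [hm.1]) (by linarith [hm.2])) dS).div_const 3
    have dT : HasDerivAt (fun x => bcT z D (sin (arcsin (√z * cos x) / 3))) _ θ := HasDerivAt.comp θ (bcT_deriv z D _ hP) dA.sin
    have dL := HasDerivAt.comp θ (bcL_deriv (bcT z D (sin (arcsin (√z * cos θ) / 3))) (by linarith) hT1) dT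
    convert! dL using 1
    rw [hzs, Real.sqrt_sq (by positivity)] at hA
    rw [g_closed _ hm]
    linear_combination (cos (arcsin (√z * cos θ) / 3) / √(1-(√z * cos θ)^2) / 3) * hA

theorem hyp_eq (z : ℝ) (hz0 : 0 < z) (hz1 : z < 1/20) :
    hyp2F1 (1/3) (2/3) 1 z = 2/π * ∫ θ in (0:ℝ)..π/2, bcg (√z * cos θ) := by
  have hσ0 : 0 < √z := Real.sqrt_pos.2 hz0
  have hσ2 := Real.sq_sqrt hz0.le
  have hmem : ∀ θ, √z * cos θ ∈ Set.Ioo (-1/2:ℝ) (1/2) := by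
    intro θ
    have h1 : √z < 1/2 := by rw [Real.sqrt_lt' (by norm_num)]; linarith
    have : |√z * cos θ| < 1/2 := by
      rw [abs_mul, abs_of_pos hσ0]
      have := abs_cos_le_one θ
      nlinarith
    have := abs_lt.1 this
    exact ⟨by linarith [this.1], this.2⟩
  have hsum := intervalIntegral.hasSum_integral_of_dominated_convergence (μ := MeasureTheory.volume) (a := 0) (b := π/2)
    (F := fun (n:ℕ) θ => bcb n * (√z * cos θ)^(2*n)) (f := fun θ => bcg (√z * cos θ)) (fun n _ => (1/2:ℝ)^(2*n))
    (fun n => Continuous.aestronglyMeasurable (by fun_prop)) (fun n => Filter.Eventually.of_forall fun θ _ => ?_)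
    (Filter.Eventually.of_forall fun θ _ => sum4) (continuous_const.intervalIntegrable _ _)
    (Filter.Eventually.of_forall fun θ _ => (sumg _ (hmem θ)).hasSum)
  · rw [← hsum.tsum_eq, ← tsum_mul_left]
    unfold hyp2F1
    apply tsum_congr
    intro n
    have e : ∀ θ, bcb n * (√z * cos θ)^(2*n) = (bcb n * z^n) * cos θ^(2*n) := by
      intro θ; rw [mul_pow, pow_mul (√z), hσ2]; ring
    simp only [e]
    rw [intervalIntegral.integral_const_mul, cos_int, ascPochhammer_eval_one, bcb]
    have h3 := (ascPochhammer_pos n (1/2:ℝ) (by norm_num)).ne'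
    have hpi := pi_ne_zero
    field_simp
  · rw [norm_mul, Real.norm_eq_abs, Real.norm_eq_abs, abs_of_pos (bcb_pos n)]
    calc _ ≤ 1 * (1/2:ℝ)^(2*n) := mul_le_mul (bcb_le n) (pow_bound _ (hmem θ) _) (abs_nonneg _) (by norm_num)
      _ = _ := one_mul _

/-- Berndt–Chan evaluation, rewritten form. -/
theorem berndt_chan_evaluation :
    hyp2F1 (1/3) (2/3) 1 ((3 * Real.sqrt 3 - 5) / 4) =
      (2 * Real.sqrt 3) ^ (-(1:ℝ)/4) *
        (Real.sqrt (Real.sqrt 3 + 1) / (2 * π) ^ ((3:ℝ)/2)) *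
        Real.Gamma (1/4) ^ 2 := by
  have h3 : √3^2 = 3 := Real.sq_sqrt (by norm_num)
  have hl : 1.7320 < √3 := Real.lt_sqrt_of_sq_lt (by norm_num)
  have hu : √3 < 1.7325 := by rw [Real.sqrt_lt' (by norm_num)]; norm_num
  have hpi := pi_pos
  set r := √3 with hr
  set D : ℝ := √(2*r-3)/4 with hDdef
  have hDr : 0 < 2*r-3 := by linarith
  have hD0 : 0 < D := by have := Real.sqrt_pos.2 hDr; positivity
  have hD2 : D^2 = (2*r-3)/16 := by rw [hDdef, div_pow, Real.sq_sqrt hDr.le]; norm_num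
  have hz0 : 0 < (3*r-5)/4 := by linarith
  have hz1 : (3*r-5)/4 < 1/20 := by linarith
  rw [hyp_eq _ hz0 hz1, int_g _ D (by linear_combination (9/2)*h3) hz0 hz1 hD0 (by rw [hD2]; ring), bcL_one]
  have hc : 2/π * (1 / (4 * √(2*π)) / (2 * √D)) = (2 * r) ^ (-(1:ℝ)/4) * (√(r + 1) / (2 * π) ^ ((3:ℝ)/2)) := by
    have hp : (2*π)^((3:ℝ)/2) = 2*π * √(2*π) := by
      rw [show (3:ℝ)/2 = 1 + 1/2 by norm_num, Real.rpow_add (by positivity), Real.rpow_one, ← Real.sqrt_eq_rpow]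
    have hq : (2 * r) ^ (-(1:ℝ)/4) = 1 / √√(2*r) := by
      rw [Real.sqrt_eq_rpow, Real.sqrt_eq_rpow, ← Real.rpow_mul (by positivity), neg_div, Real.rpow_neg (by positivity), one_div]
      norm_num
    have hk : √√(2*r) = 2 * √D * √(r+1) := by
      rw [show 2 * √D * √(r+1) = √((2 * √D * √(r+1))^2) from (Real.sqrt_sq (by positivity)).symm]
      congr 1
      rw [mul_pow, mul_pow, Real.sq_sqrt hD0.le, Real.sq_sqrt (by positivity)]
      rw [show 2^2 * D * (r+1) = √((2^2 * D * (r+1))^2) from (Real.sqrt_sq (by positivity)).symm]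
      congr 1
      rw [mul_pow, mul_pow, hD2]
      linear_combination (-2*r-1)*h3
    rw [hp, hq, hk]
    have h1 : √(r+1) ≠ 0 := by positivity
    have h2 : √D ≠ 0 := by positivity
    have h3 : √(2*π) ≠ 0 := by positivity
    field_simp
    try norm_num
  rw [← hc]
  ring
end

section
/- (Pfaff-transformed evaluation.) One has ₂F₁(1/3, 1/3; 1; (√3 − 2)/(3√3)) = (3^{3/8} / (2^{1/12} · 4 · π^{3/2})) · (√3 + 1)^{1/6} · Γ(1/4)², where Γ is the Gamma function. (The argument (√3 − 2)/(3√3) ≈ −0.0516 lies in (−1,1), so the hypergeometric series converges absolutely.) -/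
open Real

open MeasureTheory Set

lemma beta_int {a b : ℝ} (ha : 0 < a) (hb : 0 < b) :
    IntegrableOn (fun x : ℝ => x ^ (a - 1) * (1 - x) ^ (b - 1)) (Ioo 0 1) ∧
    ∫ x in Ioo (0:ℝ) 1, x ^ (a - 1) * (1 - x) ^ (b - 1) =
      Real.Gamma a * Real.Gamma b / Real.Gamma (a + b) := by
  have hc := Complex.betaIntegral_convergent (u := a) (v := b) (by simpa) (by simpa)
  rw [intervalIntegrable_iff_integrableOn_Ioc_of_le (by simp)] at hc
  have hre := hc.re
  have hcongr : ∀ x ∈ Ioc (0:ℝ) 1, RCLike.re ((x:ℂ) ^ ((a:ℂ) - 1) * (1 - (x:ℂ)) ^ ((b:ℂ) - 1))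
      = x ^ (a - 1) * (1 - x) ^ (b - 1) := by
    rintro x ⟨hx1, hx2⟩
    norm_cast
    rw [← Complex.ofReal_cpow, ← Complex.ofReal_cpow, RCLike.re_to_complex,
        Complex.re_mul_ofReal, Complex.ofReal_re]
    all_goals linarith
  constructor
  · have : IntegrableOn (fun x : ℝ => x ^ (a - 1) * (1 - x) ^ (b - 1)) (Ioc 0 1) :=
      (integrableOn_congr_fun hcongr measurableSet_Ioc).1 hre
    exact this.mono_set Ioo_subset_Ioc_self
  · have h := ProbabilityTheory.beta_eq_betaIntegralReal a b ha hb
    rw [ProbabilityTheory.beta] at h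
    rw [h, Complex.betaIntegral, intervalIntegral.integral_of_le (by norm_num),
      ← integral_Ioc_eq_integral_Ioo, ← RCLike.re_to_complex, ← integral_re hc]
    exact (setIntegral_congr_fun measurableSet_Ioc hcongr).symm

lemma poch_pos {b : ℝ} (hb : 0 < b) (n : ℕ) : 0 < (ascPochhammer ℝ n).eval b :=
  ascPochhammer_pos n b hb

lemma gamma_poch {b : ℝ} (hb : 0 < b) (n : ℕ) :
    Real.Gamma (n + b) = (ascPochhammer ℝ n).eval b * Real.Gamma b := by
  induction n with
  | zero => simp
  | succ n ih =>
    rw [ascPochhammer_succ_eval]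
    have : ((n + 1 : ℕ) : ℝ) + b = (n + b) + 1 := by push_cast; ring
    rw [this, Real.Gamma_add_one (by positivity), ih]; ring

lemma moment {b : ℝ} (hb : 0 < b) (hb1 : b < 1) (n : ℕ) :
    IntegrableOn (fun t : ℝ => t ^ (b - 1) * (1 - t) ^ (-b) * t ^ n) (Ioo 0 1) ∧
    ∫ t in Ioo (0:ℝ) 1, t ^ (b - 1) * (1 - t) ^ (-b) * t ^ n =
      Real.Gamma b * Real.Gamma (1 - b) * ((ascPochhammer ℝ n).eval b / n.factorial) := by
  have hcongr : ∀ t ∈ Ioo (0:ℝ) 1, t ^ ((n + b) - 1) * (1 - t) ^ ((1 - b) - 1) =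
      t ^ (b - 1) * (1 - t) ^ (-b) * t ^ n := by
    rintro t ⟨h0, h1⟩
    rw [show (n:ℝ) + b - 1 = (b - 1) + n by ring, Real.rpow_add h0, Real.rpow_natCast,
      show 1 - b - 1 = -b by ring]
    ring
  obtain ⟨h1, h2⟩ := beta_int (a := n + b) (b := 1 - b) (by positivity) (by linarith)
  refine ⟨(integrableOn_congr_fun hcongr measurableSet_Ioo).1 h1, ?_⟩
  rw [← setIntegral_congr_fun measurableSet_Ioo hcongr, h2, gamma_poch hb,
    show (n:ℝ) + b + (1 - b) = n + 1 by ring, Real.Gamma_nat_eq_factorial]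
  ring

lemma euler_int {b : ℝ} (hb : 0 < b) (hb1 : b < 1) (c : ℕ → ℝ) (hc : ∀ n, |c n| ≤ 1)
    {x : ℝ} (hx : |x| < 1) :
    Real.Gamma b * Real.Gamma (1 - b) *
      ∑' n : ℕ, c n * ((ascPochhammer ℝ n).eval b / n.factorial) * x ^ n =
    ∫ t in Ioo (0:ℝ) 1, t ^ (b - 1) * (1 - t) ^ (-b) * ∑' n : ℕ, c n * (x * t) ^ n := by
  have hs : Summable (fun n : ℕ => |x| ^ n) := summable_geometric_of_lt_one (abs_nonneg _) hx
  have key := hasSum_integral_of_dominated_convergence (μ := volume.restrict (Ioo (0:ℝ) 1))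
    (F := fun n t => c n * x ^ n * (t ^ (b - 1) * (1 - t) ^ (-b) * t ^ n))
    (f := fun t => t ^ (b - 1) * (1 - t) ^ (-b) * ∑' n : ℕ, c n * (x * t) ^ n)
    (bound := fun n t => |x| ^ n * (t ^ (b - 1) * (1 - t) ^ (-b)))
    (fun n => ((moment hb hb1 n).1.const_mul _).aestronglyMeasurable)
    (fun n => by
      refine ae_restrict_of_forall_mem measurableSet_Ioo (fun t ht => ?_)
      obtain ⟨h0, h1⟩ := ht
      have hp1 : 0 < t ^ (b - 1) := Real.rpow_pos_of_pos h0 _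
      have hp2 : 0 < (1 - t) ^ (-b) := Real.rpow_pos_of_pos (by linarith) _
      have hp3 : t ^ n ≤ 1 := pow_le_one₀ h0.le h1.le
      rw [Real.norm_eq_abs, abs_mul, abs_mul, abs_mul, abs_mul, abs_pow, abs_pow, abs_of_pos hp1,
        abs_of_pos hp2, abs_of_pos h0]
      have : |c n| * |x| ^ n ≤ |x| ^ n := by
        have := hc n
        have h4 : 0 ≤ |x| ^ n := by positivity
        nlinarith
      have h5 : t ^ (b - 1) * (1 - t) ^ (-b) * t ^ n ≤ t ^ (b - 1) * (1 - t) ^ (-b) := by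
        have : 0 < t ^ (b - 1) * (1 - t) ^ (-b) := by positivity
        nlinarith
      gcongr)
    (by
      refine ae_restrict_of_forall_mem measurableSet_Ioo (fun t ht => ?_)
      exact hs.mul_right _)
    (by
      simp_rw [tsum_mul_right]
      have := (moment hb hb1 0).1
      simp only [pow_zero, mul_one] at this
      exact this.const_mul _)
    (by
      refine ae_restrict_of_forall_mem measurableSet_Ioo (fun t ht => ?_)
      obtain ⟨h0, h1⟩ := ht
      have : Summable (fun n : ℕ => c n * (x * t) ^ n) := by
        refine Summable.of_norm_bounded hs (fun n => ?_)
        rw [Real.norm_eq_abs, abs_mul, abs_pow, abs_mul, abs_of_pos h0]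
        have h3 : (|x| * t) ^ n ≤ |x| ^ n := by
          apply pow_le_pow_left₀ (by positivity)
          have := abs_nonneg x
          nlinarith
        calc |c n| * (|x| * t) ^ n ≤ 1 * |x| ^ n := by
              gcongr; exact hc n
          _ = _ := one_mul _
      have := this.hasSum.mul_left (t ^ (b - 1) * (1 - t) ^ (-b))
      have hfun : (fun n : ℕ => c n * x ^ n * (t ^ (b - 1) * (1 - t) ^ (-b) * t ^ n)) =
          fun n : ℕ => t ^ (b - 1) * (1 - t) ^ (-b) * (c n * (x * t) ^ n) := by
        ext n; rw [mul_pow]; ring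
      rw [hfun]; exact this)
  rw [← key.tsum_eq, ← tsum_mul_left]
  congr 1
  ext n
  rw [integral_const_mul, (moment hb hb1 n).2]
  ring

lemma binom_sum (a : ℝ) {x : ℝ} (hx : |x| < 1) :
    ∑' n : ℕ, ((ascPochhammer ℝ n).eval a / n.factorial) * x ^ n = (1 - x) ^ (-a) := by
  have h := (Real.one_div_one_sub_rpow_hasFPowerSeriesOnBall_zero a).hasSum (y := x)
    (by simpa [enorm_eq_nnnorm] using! hx)
  have h1 := h.tsum_eq
  rw [zero_add] at h1
  rw [Real.rpow_neg (by have := (abs_lt.1 hx).2; linarith), ← one_div, ← h1]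
  congr 1
  ext n
  simp only [FormalMultilinearSeries.ofScalars_apply_eq, smul_eq_mul]
  congr 1
  have h2 := Ring.factorial_nsmul_multichoose_eq_ascPochhammer a n
  rw [Ring.choose, show a + n - 1 - n + 1 = a by ring]
  rw [nsmul_eq_mul, Polynomial.ascPochhammer_smeval_eq_eval] at h2
  rw [← h2]
  field_simp

lemma pochfac_le {a : ℝ} (ha : 0 < a) (ha1 : a ≤ 1) (n : ℕ) :
    |(ascPochhammer ℝ n).eval a / n.factorial| ≤ 1 := by
  have h0 : 0 < (ascPochhammer ℝ n).eval a := poch_pos ha n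
  rw [abs_of_pos (by positivity), div_le_one (by positivity)]
  induction n with
  | zero => simp
  | succ n ih =>
    have := poch_pos ha n
    rw [ascPochhammer_succ_eval, Nat.factorial_succ]
    push_cast
    rw [mul_comm]
    have := ih this
    gcongr ?_ * ?_
    linarith

lemma hyp_one (a b x : ℝ) : hyp2F1 a b 1 x = ∑' n : ℕ, ((ascPochhammer ℝ n).eval a / n.factorial) *
    ((ascPochhammer ℝ n).eval b / n.factorial) * x ^ n := by
  unfold hyp2F1
  congr 1
  ext n
  rw [ascPochhammer_eval_one]
  ring

lemma pfaff_third {z α : ℝ} (hz : |z| < 1) (hα : |α| < 1) (h : (1 - z) * (1 - α) = 1) :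
    hyp2F1 (1/3) (1/3) 1 z = (1 - α) ^ ((1:ℝ)/3) * hyp2F1 (1/3) (2/3) 1 α := by
  have e1 := euler_int (b := 1/3) (by norm_num) (by norm_num)
    (fun n => (ascPochhammer ℝ n).eval (1/3) / n.factorial)
    (pochfac_le (by norm_num) (by norm_num)) hz
  have e2 := euler_int (b := 2/3) (by norm_num) (by norm_num)
    (fun n => (ascPochhammer ℝ n).eval (1/3) / n.factorial)
    (pochfac_le (by norm_num) (by norm_num)) hα
  rw [← hyp_one] at e1 e2
  have hlt : ∀ y : ℝ, |y| < 1 → ∀ t ∈ Ioo (0:ℝ) 1, |y * t| < 1 := by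
    rintro y hy t ⟨h0, h1⟩
    rw [abs_mul, abs_of_pos h0]
    have := abs_nonneg y
    nlinarith
  have c1 : ∀ t ∈ Ioo (0:ℝ) 1, t ^ ((1:ℝ)/3 - 1) * (1 - t) ^ (-((1:ℝ)/3)) *
      ∑' n : ℕ, ((ascPochhammer ℝ n).eval (1/3) / n.factorial) * (z * t) ^ n =
      t ^ ((1:ℝ)/3 - 1) * (1 - t) ^ (-((1:ℝ)/3)) * (1 - z * t) ^ (-((1:ℝ)/3)) := by
    intro t ht
    rw [binom_sum _ (hlt z hz t ht)]
  have c2 : ∀ t ∈ Ioo (0:ℝ) 1, t ^ ((2:ℝ)/3 - 1) * (1 - t) ^ (-((2:ℝ)/3)) *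
      ∑' n : ℕ, ((ascPochhammer ℝ n).eval (1/3) / n.factorial) * (α * t) ^ n =
      t ^ ((2:ℝ)/3 - 1) * (1 - t) ^ (-((2:ℝ)/3)) * (1 - α * t) ^ (-((1:ℝ)/3)) := by
    intro t ht
    rw [binom_sum _ (hlt α hα t ht)]
  rw [setIntegral_congr_fun measurableSet_Ioo c1] at e1
  rw [setIntegral_congr_fun measurableSet_Ioo c2] at e2
  have hz1 : 0 < 1 - z := by have := (abs_lt.1 hz).2; linarith
  have hα1 : 0 < 1 - α := by have := (abs_lt.1 hα).2; linarith
  have e3 : ∫ t in Ioo (0:ℝ) 1, t ^ ((1:ℝ)/3 - 1) * (1 - t) ^ (-((1:ℝ)/3)) *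
        (1 - z * t) ^ (-((1:ℝ)/3)) = (1 - α) ^ ((1:ℝ)/3) *
      ∫ t in Ioo (0:ℝ) 1, t ^ ((2:ℝ)/3 - 1) * (1 - t) ^ (-((2:ℝ)/3)) *
        (1 - α * t) ^ (-((1:ℝ)/3)) := by
    rw [← integral_Ioc_eq_integral_Ioo, ← intervalIntegral.integral_of_le (by norm_num)]
    have := intervalIntegral.integral_comp_sub_left (a := (0:ℝ)) (b := 1)
      (fun t : ℝ => t ^ ((1:ℝ)/3 - 1) * (1 - t) ^ (-((1:ℝ)/3)) * (1 - z * t) ^ (-((1:ℝ)/3))) 1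
    simp only [sub_self, sub_zero] at this
    rw [← this, intervalIntegral.integral_of_le (by norm_num), integral_Ioc_eq_integral_Ioo,
      ← integral_const_mul]
    refine setIntegral_congr_fun measurableSet_Ioo (fun t ht => ?_)
    have h1 : 1 - z * (1 - t) = (1 - α)⁻¹ * (1 - α * t) := by
      field_simp
      linear_combination (1 - t) * h
    have h2 : 0 < 1 - α * t := by have := (abs_lt.1 (hlt α hα t ht)).2; linarith
    simp only [h1]
    rw [Real.mul_rpow (by positivity) h2.le, Real.inv_rpow hα1.le, Real.rpow_neg hα1.le, inv_inv,
      show (1:ℝ)/3 - 1 = -(2/3) by norm_num, show (2:ℝ)/3 - 1 = -(1/3) by norm_num,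
      show 1 - (1 - t) = t by ring]
    ring
  rw [e3, ← e2, show (1:ℝ) - 1/3 = 2/3 by norm_num, show (1:ℝ) - 2/3 = 1/3 by norm_num] at e1
  have g1 : 0 < Real.Gamma (1/3) := Real.Gamma_pos_of_pos (by norm_num)
  have g2 : 0 < Real.Gamma (2/3) := Real.Gamma_pos_of_pos (by norm_num)
  apply mul_left_cancel₀ (mul_pos g1 g2).ne'
  rw [e1]; ring

lemma deriv_ps (c : ℕ → ℝ) (hc : ∀ n, |c n| ≤ 1) {x : ℝ} (hx : |x| < 1) :
    HasDerivAt (fun y => ∑' n : ℕ, c n * y ^ n) (∑' n : ℕ, c n * (n * x ^ (n - 1))) x := by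
  obtain ⟨r, hr1, hr2⟩ := exists_between hx
  have hr0 : 0 < r := (abs_nonneg x).trans_lt hr1
  have hsu : Summable (fun n : ℕ => (n:ℝ) * r ^ (n - 1)) := by
    have := summable_pow_mul_geometric_of_norm_lt_one 1 (r := r) (by
      rw [Real.norm_eq_abs, abs_of_pos hr0]; exact hr2)
    refine (this.mul_right r⁻¹).congr (fun n => ?_)
    rcases n with _ | n
    · simp
    · simp [pow_succ]; field_simp
  refine hasDerivAt_tsum_of_isPreconnected (𝕜 := ℝ) (F := ℝ)
    (g := fun n y => c n * y ^ n) (g' := fun n y => c n * (n * y ^ (n - 1))) (u := fun n : ℕ => (n:ℝ) * r ^ (n - 1))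
    (t := Metric.ball (0:ℝ) r) (y₀ := 0) hsu Metric.isOpen_ball
    (convex_ball (0:ℝ) r).isPreconnected ?_ ?_ (by simpa using hr0) ?_ (by simpa using hr1)
  · intro n y hy
    exact (hasDerivAt_pow n y).const_mul (c n)
  · intro n y hy
    have hy' : |y| < r := by simpa using hy
    rw [Real.norm_eq_abs, abs_mul, abs_mul, abs_pow, Nat.abs_cast]
    calc |c n| * (n * |y| ^ (n - 1)) ≤ 1 * (n * r ^ (n - 1)) := by
          gcongr; exact hc n
      _ = _ := one_mul _
  · refine summable_of_ne_finset_zero (s := {0}) (fun n hn => ?_)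
    have : n ≠ 0 := by simpa using hn
    simp [this]

lemma summ_ps (c : ℕ → ℝ) (hc : ∀ n, |c n| ≤ 1) {x : ℝ} (hx : |x| < 1) :
    Summable (fun n : ℕ => c n * x ^ n) := by
  refine Summable.of_norm_bounded (summable_geometric_of_lt_one (abs_nonneg _) hx) (fun n => ?_)
  rw [Real.norm_eq_abs, abs_mul, abs_pow]
  calc |c n| * |x| ^ n ≤ 1 * |x| ^ n := by
        gcongr; exact hc n
    _ = _ := one_mul _

lemma summ_ps' (c : ℕ → ℝ) (hc : ∀ n, |c n| ≤ 1) {x : ℝ} (hx : |x| < 1) :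
    Summable (fun n : ℕ => c n * (n * x ^ n)) := by
  have := summable_pow_mul_geometric_of_norm_lt_one 1 (r := |x|) (by simpa using hx)
  refine Summable.of_norm_bounded this (fun n => ?_)
  rw [Real.norm_eq_abs, abs_mul, abs_mul, abs_pow, Nat.abs_cast, pow_one]
  calc |c n| * (n * |x| ^ n) ≤ 1 * (n * |x| ^ n) := by
        gcongr; exact hc n
    _ = _ := one_mul _

lemma x_deriv (c : ℕ → ℝ) (x : ℝ) :
    x * (∑' n : ℕ, c n * (n * x ^ (n - 1))) = ∑' n : ℕ, c n * (n * x ^ n) := by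
  rw [← tsum_mul_left]
  congr 1; ext n
  rcases n with _ | n
  · simp
  · simp [pow_succ]; ring

lemma summ_ps'' (c : ℕ → ℝ) (hc : ∀ n, |c n| ≤ 1) {x : ℝ} (hx : |x| < 1) :
    Summable (fun n : ℕ => c n * (n * x ^ (n - 1))) := by
  rw [← summable_nat_add_iff 1]
  have h := (summ_ps' (fun n => c (n+1)) (fun n => hc _) hx).add
    (summ_ps (fun n => c (n+1)) (fun n => hc _) hx)
  refine h.congr (fun n => ?_)
  simp only [Nat.add_sub_cancel]
  push_cast
  ring

lemma shift_deriv (c : ℕ → ℝ) (hc : ∀ n, |c n| ≤ 1) {x : ℝ} (hx : |x| < 1) :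
    (∑' n : ℕ, c n * (n * x ^ (n - 1))) = ∑' n : ℕ, c (n + 1) * ((n + 1) * x ^ n) := by
  rw [(summ_ps'' c hc hx).tsum_eq_zero_add]
  simp

noncomputable def gc (n : ℕ) : ℝ := (ascPochhammer ℝ n).eval (1/3) * (ascPochhammer ℝ n).eval (2/3) /
  ((ascPochhammer ℝ n).eval (1/2) * n.factorial)

lemma gc_pos (n : ℕ) : 0 < gc n := by
  have h1 := poch_pos (b := 1/3) (by norm_num) n
  have h2 := poch_pos (b := 2/3) (by norm_num) n
  have h3 := poch_pos (b := 1/2) (by norm_num) n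
  unfold gc; positivity

lemma gc_succ (n : ℕ) : gc (n+1) * ((n + 1/2) * (n + 1)) = gc n * ((n + 1/3) * (n + 2/3)) := by
  have h3 := poch_pos (b := 1/2) (by norm_num) n
  have h4 : ((n+1 : ℕ).factorial : ℝ) = (n + 1) * n.factorial := by
    rw [Nat.factorial_succ]; push_cast; ring
  unfold gc
  rw [ascPochhammer_succ_eval, ascPochhammer_succ_eval, ascPochhammer_succ_eval, h4]
  have : (0:ℝ) < 1/2 + n := by positivity
  field_simp
  ring

lemma gc_zero : gc 0 = 1 := by simp [gc]

lemma gc_le (n : ℕ) : |gc n| ≤ 1 := by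
  rw [abs_of_pos (gc_pos n)]
  induction n with
  | zero => simp [gc_zero]
  | succ n ih =>
    have h := gc_succ n
    have h0 := gc_pos n
    by_contra hcon
    push Not at hcon
    have hn : (0:ℝ) ≤ n := Nat.cast_nonneg n
    have : (0:ℝ) < (n + 1/2) * (n + 1) := by positivity
    have h2 : gc n * (((n:ℝ) + 1/3) * (n + 2/3)) ≤ 1 * ((n + 1/3) * (n + 2/3)) := by gcongr
    nlinarith

noncomputable def kc (n : ℕ) : ℝ := gc n / (2 * n + 1)

lemma kc_le (n : ℕ) : |kc n| ≤ 1 := by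
  have := gc_le n
  unfold kc
  rw [abs_div, abs_of_pos (a := (2 * (n:ℝ) + 1)) (by positivity), div_le_one (by positivity)]
  have hn : (0:ℝ) ≤ n := Nat.cast_nonneg n
  linarith

noncomputable def Gf (x : ℝ) : ℝ := ∑' n : ℕ, gc n * x ^ n
noncomputable def Kf (x : ℝ) : ℝ := ∑' n : ℕ, kc n * x ^ n

lemma Gf_deriv {x : ℝ} (hx : |x| < 1) :
    ∃ d, HasDerivAt Gf d x ∧ 2 * (1 - x) * d = Gf x - Kf x / 9 := by
  refine ⟨_, deriv_ps gc gc_le hx, ?_⟩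
  have s1 := (summ_ps gc gc_le hx)
  have s2 := (summ_ps kc kc_le hx)
  have s3 := summ_ps' gc gc_le hx
  have s4 := summ_ps'' gc gc_le hx
  rw [← summable_nat_add_iff 1] at s4
  simp only [Nat.add_sub_cancel] at s4
  push_cast at s4
  have : 2 * (1 - x) * (∑' n : ℕ, gc n * (n * x ^ (n - 1))) =
    2 * (∑' n : ℕ, gc n * (n * x ^ (n - 1))) - 2 * (x * (∑' n : ℕ, gc n * (n * x ^ (n - 1)))) := by
    ring
  rw [this, x_deriv, shift_deriv gc gc_le hx, Gf, Kf, ← tsum_mul_left, ← tsum_mul_left,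
    ← tsum_div_const, ← (s4.mul_left 2).tsum_sub (s3.mul_left 2), ← s1.tsum_sub (s2.div_const 9)]
  congr 1; ext n
  have h := gc_succ n
  unfold kc
  have hn : (2 * (n:ℝ) + 1) ≠ 0 := by positivity
  field_simp
  linear_combination (36:ℝ) * x ^ n * h

lemma Kf_deriv {x : ℝ} (hx : |x| < 1) :
    ∃ d, HasDerivAt Kf d x ∧ Kf x + 2 * x * d = Gf x := by
  refine ⟨_, deriv_ps kc kc_le hx, ?_⟩
  have s2 := (summ_ps kc kc_le hx)
  have s3 := summ_ps' kc kc_le hx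
  rw [mul_assoc, x_deriv, Gf, Kf, ← tsum_mul_left, ← s2.tsum_add (s3.mul_left 2)]
  congr 1; ext n
  unfold kc
  have hn : (2 * (n:ℝ) + 1) ≠ 0 := by positivity
  field_simp
  ring

lemma sin_sq_lt {θ : ℝ} (h : cos θ ≠ 0) : |sin θ ^ 2| < 1 := by
  rw [abs_of_nonneg (by positivity)]
  have := sin_sq_add_cos_sq θ
  have : 0 < cos θ ^ 2 := by positivity
  linarith

lemma Gf_trig {θ : ℝ} (h0 : 0 ≤ θ) (h1 : θ < π / 2) :
    cos θ * Gf (sin θ ^ 2) = cos (θ / 3) := by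
  set C : ℝ → ℝ := fun φ => cos φ * Gf (sin φ ^ 2) with hC
  set S : ℝ → ℝ := fun φ => sin φ * Kf (sin φ ^ 2) / 3 with hS
  have hcos : ∀ φ ∈ Icc 0 θ, cos φ ≠ 0 := fun φ hφ =>
    (cos_pos_of_mem_Ioo ⟨by have := hφ.1; have := pi_pos; linarith, by have := hφ.2; linarith⟩).ne'
  have dC : ∀ φ ∈ Icc 0 θ, HasDerivAt C (- S φ / 3) φ := by
    intro φ hφ
    obtain ⟨d, hd, he⟩ := Gf_deriv (sin_sq_lt (hcos φ hφ))
    have h2 := (hasDerivAt_cos φ).mul (hd.comp φ ((hasDerivAt_sin φ).pow 2))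
    refine h2.congr_deriv ?_
    simp only [hS, Function.comp]
    have hsc := sin_sq_add_cos_sq φ
    push_cast
    linear_combination (-sin φ * 2 * d) * hsc + sin φ * he + 2 * sin φ * d * (hsc) * 2
  have dS : ∀ φ ∈ Icc 0 θ, HasDerivAt S (C φ / 3) φ := by
    intro φ hφ
    obtain ⟨d, hd, he⟩ := Kf_deriv (sin_sq_lt (hcos φ hφ))
    have h2 := ((hasDerivAt_sin φ).mul (hd.comp φ ((hasDerivAt_sin φ).pow 2))).div_const 3
    refine h2.congr_deriv ?_
    simp only [hC, Function.comp]
    push_cast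
    linear_combination cos φ / 3 * he
  have dc : ∀ φ : ℝ, HasDerivAt (fun φ => cos (φ / 3)) (- sin (φ / 3) / 3) φ := by
    intro φ
    have := (hasDerivAt_cos (φ/3)).comp φ ((hasDerivAt_id φ).div_const 3)
    refine this.congr_deriv (by ring)
  have ds : ∀ φ : ℝ, HasDerivAt (fun φ => sin (φ / 3)) (cos (φ / 3) / 3) φ := by
    intro φ
    have := (hasDerivAt_sin (φ/3)).comp φ ((hasDerivAt_id φ).div_const 3)
    refine this.congr_deriv (by ring)
  have G0 : Gf 0 = 1 := by
    unfold Gf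
    rw [tsum_eq_single 0 (fun n hn => by simp [hn])]
    simp [gc_zero]
  have k1 : C θ * cos (θ/3) + S θ * sin (θ/3) = 1 := by
    have d1 : ∀ φ ∈ Icc 0 θ, HasDerivAt (fun φ => C φ * cos (φ/3) + S φ * sin (φ/3)) 0 φ := by
      intro φ hφ
      refine (((dC φ hφ).mul (dc φ)).add ((dS φ hφ).mul (ds φ))).congr_deriv (by ring)
    have := constant_of_has_deriv_right_zero
      (fun φ hφ => (d1 φ hφ).continuousAt.continuousWithinAt)
      (fun φ hφ => (d1 φ ⟨hφ.1, hφ.2.le⟩).hasDerivWithinAt) θ ⟨h0, le_rfl⟩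
    rw [this]; simp [hC, hS, G0]
  have k2 : C θ * sin (θ/3) - S θ * cos (θ/3) = 0 := by
    have d1 : ∀ φ ∈ Icc 0 θ, HasDerivAt (fun φ => C φ * sin (φ/3) - S φ * cos (φ/3)) 0 φ := by
      intro φ hφ
      refine (((dC φ hφ).mul (ds φ)).sub ((dS φ hφ).mul (dc φ))).congr_deriv (by ring)
    have := constant_of_has_deriv_right_zero
      (fun φ hφ => (d1 φ hφ).continuousAt.continuousWithinAt)
      (fun φ hφ => (d1 φ ⟨hφ.1, hφ.2.le⟩).hasDerivWithinAt) θ ⟨h0, le_rfl⟩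
    rw [this]; simp [hC, hS]
  have hsc := sin_sq_add_cos_sq (θ/3)
  change C θ = _
  linear_combination (cos (θ/3)) * k1 + sin (θ/3) * k2 - C θ * hsc

lemma Gf_alg {v : ℝ} (h0 : 0 ≤ v) (h1 : v < 1/4) : Gf (v * (3 - 4 * v) ^ 2) = 1 / (1 - 4 * v) := by
  have hs0 : 0 ≤ √v := Real.sqrt_nonneg v
  have hsq : √v ^ 2 = v := Real.sq_sqrt h0
  have hs1 : √v < 1/2 := by nlinarith
  set ψ := arcsin √v with hψ
  have hsin : sin ψ = √v := sin_arcsin (by linarith) (by linarith)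
  have hψ0 : 0 ≤ ψ := arcsin_nonneg.2 hs0
  have hψ1 : ψ < π / 6 := by
    rw [hψ, arcsin_lt_iff_lt_sin ⟨by linarith, by linarith⟩
      ⟨by have := pi_pos; linarith, by have := pi_pos; linarith⟩, sin_pi_div_six]
    exact hs1
  have hcpos : 0 < cos ψ := cos_pos_of_mem_Ioo
    ⟨by have := pi_pos; linarith, by have := pi_pos; linarith⟩
  have hc2 : cos ψ ^ 2 = 1 - v := by
    have := sin_sq_add_cos_sq ψ
    rw [hsin, hsq] at this; linarith
  have key := Gf_trig (θ := 3 * ψ) (by linarith) (by linarith)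
  rw [cos_three_mul, sin_three_mul, hsin, show 3 * ψ / 3 = ψ by ring] at key
  have e1 : (3 * √v - 4 * √v ^ 3) ^ 2 = v * (3 - 4 * v) ^ 2 := by
    rw [show 3 * √v - 4 * √v ^ 3 = √v * (3 - 4 * √v ^ 2) by ring, mul_pow, hsq]
  rw [e1] at key
  have e2 : 4 * cos ψ ^ 3 - 3 * cos ψ = cos ψ * (1 - 4 * v) := by
    rw [show 4 * cos ψ ^ 3 - 3 * cos ψ = cos ψ * (4 * cos ψ ^ 2 - 3) by ring, hc2]; ring
  rw [e2] at key
  have : (1 - 4 * v) ≠ 0 := by linarith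
  rw [eq_div_iff this]
  apply mul_left_cancel₀ hcpos.ne'
  linear_combination key

lemma hyp_eq_int {α : ℝ} (hα : |α| < 1) : π * hyp2F1 (1/3) (2/3) 1 α =
    ∫ t in Ioo (0:ℝ) 1, t ^ (-((1:ℝ)/2)) * (1 - t) ^ (-((1:ℝ)/2)) * Gf (α * t) := by
  have e := euler_int (b := 1/2) (by norm_num) (by norm_num) gc gc_le hα
  rw [show (1:ℝ) - 1/2 = 1/2 by norm_num, Real.Gamma_one_half_eq, Real.mul_self_sqrt pi_pos.le,
    show (1:ℝ)/2 - 1 = -(1/2) by norm_num] at e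
  rw [hyp_one]
  refine Eq.trans ?_ e
  congr 2; ext n
  have h3 := poch_pos (b := 1/2) (by norm_num) n
  unfold gc
  field_simp

lemma mono_aux {f f' : ℝ → ℝ} {b : ℝ} (hd : ∀ v ∈ Icc 0 b, HasDerivAt f (f' v) v)
    (hp : ∀ v ∈ Ioo 0 b, 0 < f' v) : StrictMonoOn f (Icc 0 b) := by
  refine strictMonoOn_of_deriv_pos (convex_Icc 0 b)
    (fun v hv => (hd v hv).continuousAt.continuousWithinAt) (fun v hv => ?_)
  rw [interior_Icc] at hv
  rw [(hd v (Ioo_subset_Icc_self hv)).deriv]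
  exact hp v hv

lemma subst_aux {f f' : ℝ → ℝ} {b : ℝ} (hb : 0 < b) (hd : ∀ v ∈ Icc 0 b, HasDerivAt f (f' v) v)
    (hp : ∀ v ∈ Ioo 0 b, 0 < f' v) (f0 : f 0 = 0) (f1 : f b = 1) (g : ℝ → ℝ) :
    ∫ x in Ioo (0:ℝ) 1, g x = ∫ v in Ioo 0 b, f' v * g (f v) := by
  have hmono := mono_aux hd hp
  have himg : f '' Ioo 0 b = Ioo 0 1 := by
    apply Subset.antisymm
    · rintro _ ⟨v, hv, rfl⟩
      refine ⟨?_, ?_⟩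
      · rw [← f0]; exact hmono ⟨le_rfl, hb.le⟩ ⟨hv.1.le, hv.2.le⟩ hv.1
      · rw [← f1]; exact hmono ⟨hv.1.le, hv.2.le⟩ ⟨hb.le, le_rfl⟩ hv.2
    · have := intermediate_value_Ioo hb.le
        (fun v hv => (hd v hv).continuousAt.continuousWithinAt : ContinuousOn f (Icc 0 b))
      rwa [f0, f1] at this
  rw [← himg, integral_image_eq_integral_abs_deriv_smul measurableSet_Ioo
    (fun v hv => (hd v (Ioo_subset_Icc_self hv)).hasDerivWithinAt)
    (hmono.injOn.mono Ioo_subset_Icc_self)]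
  refine setIntegral_congr_fun measurableSet_Ioo (fun v hv => ?_)
  simp only [smul_eq_mul]
  rw [abs_of_pos (hp v hv)]

lemma rpow_half {x y : ℝ} (hy : 0 < y) (h : x = y ^ 2) : x ^ (-((1:ℝ)/2)) = y⁻¹ := by
  rw [h, Real.rpow_neg (by positivity), ← Real.sqrt_eq_rpow, Real.sqrt_sq hy.le]

lemma rpow_three_quarter {x y : ℝ} (hy : 0 < y) (h : x = y ^ 4) :
    x ^ (-((3:ℝ)/4)) = (y ^ 3)⁻¹ := by
  rw [h, Real.rpow_neg (by positivity), ← Real.rpow_natCast y 4, ← Real.rpow_mul hy.le]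
  norm_num

lemma key_id (w v : ℝ) (hw : w ^ 2 = 3) :
    ((3 * w - 5) / 4 - 48 * v ^ 2 + 128 * v ^ 3) ^ 2 * ((3 * w - 5) / 4 - v * (3 - 4 * v) ^ 2) =
    ((3 * w - 5) / 4 - 3 * v + 48 * v ^ 2 - 64 * v ^ 3) ^ 3 -
      81 * (2 * w - 3) * v ^ 2 * ((3 * w - 5) / 4 - 3 * v + 48 * v ^ 2 - 64 * v ^ 3) := by
  have h3 : w ^ 3 = 3 * w := by rw [pow_succ, hw]
  ring_nf
  simp only [hw, h3]
  ring

lemma int_eq {κ : ℝ} (hκ : 0 < κ) (hκ4 : κ ^ 4 = 81 * (2 * √3 - 3)) :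
    ∫ t in Ioo (0:ℝ) 1, t ^ (-((1:ℝ)/2)) * (1 - t) ^ (-((1:ℝ)/2)) * Gf ((3 * √3 - 5) / 4 * t) =
    3 / (2 * κ) * ∫ r in Ioo (0:ℝ) 1, r ^ (-((3:ℝ)/4)) * (1 - r) ^ (-((1:ℝ)/2)) := by
  have hw : √3 ^ 2 = (3:ℝ) := Real.sq_sqrt (by norm_num)
  have hw0 : 0 ≤ √3 := Real.sqrt_nonneg 3
  set w := √(3:ℝ) with hwdef
  have hw1 : 1.732 < w := by nlinarith
  have hw2 : w < 1.7321 := by nlinarith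
  clear_value w
  have hid := key_id w
  set α := (3 * w - 5) / 4 with hαdef
  have ha1 : 0.049 ≤ α := by rw [hαdef]; linarith
  have ha2 : α ≤ 0.05 := by rw [hαdef]; linarith
  clear_value α
  have hα0 : 0 < α := by linarith
  set k := 81 * (2 * w - 3) with hkdef
  -- the polynomial `p` and its root
  have hpd : ∀ v : ℝ, HasDerivAt (fun v => v * (3 - 4 * v) ^ 2 / α)
      ((3 - 4 * v) * (3 - 12 * v) / α) v := by
    intro v
    have h1 : HasDerivAt (fun v : ℝ => 3 - 4 * v) (-4) v := by
      simpa using ((hasDerivAt_id v).const_mul 4).const_sub 3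
    refine (((hasDerivAt_id v).mul (h1.pow 2)).div_const α).congr_deriv ?_
    simp only [id, Pi.pow_apply]
    push_cast
    ring
  obtain ⟨b, hb, hb1⟩ : ∃ b ∈ Ioo (0:ℝ) (1/100), b * (3 - 4 * b) ^ 2 / α = 1 := by
    have := intermediate_value_Ioo (a := (0:ℝ)) (b := 1/100) (by norm_num)
      (fun v hv => (hpd v).continuousAt.continuousWithinAt :
        ContinuousOn (fun v => v * (3 - 4 * v) ^ 2 / α) (Icc 0 (1/100)))
    have h1 : (1:ℝ) ∈ Ioo ((0:ℝ) * (3 - 4 * 0) ^ 2 / α) ((1/100) * (3 - 4 * (1/100)) ^ 2 / α) := by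
      refine ⟨by simp, ?_⟩
      rw [lt_div_iff₀ hα0]; norm_num; linarith
    exact this h1
  obtain ⟨hb0, hb2⟩ := hb
  have hpp : ∀ v ∈ Ioo 0 b, 0 < (3 - 4 * v) * (3 - 12 * v) / α := by
    rintro v ⟨h0, h1⟩
    have : 0 < 3 - 4 * v := by linarith
    have : 0 < 3 - 12 * v := by linarith
    positivity
  have hpm := mono_aux (b := b) (fun v _ => hpd v) hpp
  -- the polynomials `n` and `m`
  have hn : ∀ v ∈ Icc 0 b, 0 < α - 3 * v + 48 * v ^ 2 - 64 * v ^ 3 := by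
    rintro v ⟨h0, h1⟩
    have : 0 ≤ v ^ 2 * (48 - 64 * v) := mul_nonneg (by positivity) (by linarith)
    nlinarith
  have hm : ∀ v ∈ Icc 0 b, 0 < α - 48 * v ^ 2 + 128 * v ^ 3 := by
    rintro v ⟨h0, h1⟩
    have : 0 ≤ v ^ 3 := by positivity
    nlinarith
  have hrd : ∀ v ∈ Icc 0 b, HasDerivAt (fun v => k * v ^ 2 / (α - 3 * v + 48 * v ^ 2 - 64 * v ^ 3) ^ 2)
      (2 * k * v * (α - 48 * v ^ 2 + 128 * v ^ 3) / (α - 3 * v + 48 * v ^ 2 - 64 * v ^ 3) ^ 3) v := by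
    intro v hv
    have hnv := hn v hv
    have h1 : HasDerivAt (fun v : ℝ => α - 3 * v + 48 * v ^ 2 - 64 * v ^ 3)
        (-3 + 96 * v - 192 * v ^ 2) v := by
      refine (((((hasDerivAt_id v).const_mul 3).const_sub α).add ((hasDerivAt_pow 2 v).const_mul 48)).sub
        ((hasDerivAt_pow 3 v).const_mul 64)).congr_deriv ?_
      push_cast; ring
    refine (((hasDerivAt_pow 2 v).const_mul k).div (h1.pow 2) (pow_pos hnv 2).ne').congr_deriv ?_
    simp only [Pi.pow_apply]
    push_cast
    rw [show α - 48 * v ^ 2 + 128 * v ^ 3 = (α - 3 * v + 48 * v ^ 2 - 64 * v ^ 3) -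
      v * (-3 + 96 * v - 192 * v ^ 2) by ring]
    generalize α - 3 * v + 48 * v ^ 2 - 64 * v ^ 3 = Y at hnv
    generalize -3 + 96 * v - 192 * v ^ 2 = D
    field_simp
  have hk0 : 0 < k := by rw [hkdef]; linarith
  have hrp : ∀ v ∈ Ioo 0 b, 0 < 2 * k * v * (α - 48 * v ^ 2 + 128 * v ^ 3) /
      (α - 3 * v + 48 * v ^ 2 - 64 * v ^ 3) ^ 3 := by
    intro v hv
    have h1 := hn v (Ioo_subset_Icc_self hv)
    have h2 := hm v (Ioo_subset_Icc_self hv)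
    have h3 := hv.1
    positivity
  rw [subst_aux hb0 (fun v _ => hpd v) hpp (by simp) hb1]
  rw [subst_aux hb0 hrd hrp (by simp) (by
    have h1 := hn b ⟨hb0.le, le_rfl⟩
    have h2 := hid b hw
    have h3 : α - b * (3 - 4 * b) ^ 2 = 0 := by
      rw [div_eq_iff hα0.ne'] at hb1; linarith
    rw [h3, mul_zero] at h2
    rw [div_eq_one_iff_eq (by positivity)]
    apply mul_left_cancel₀ h1.ne'
    linear_combination h2)]
  rw [← integral_const_mul]
  refine setIntegral_congr_fun measurableSet_Ioo (fun v hv => ?_)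
  have hv0 := hv.1
  have hvb := hv.2
  have hq : 0 < α - v * (3 - 4 * v) ^ 2 := by
    have := hpm (Ioo_subset_Icc_self hv) ⟨hb0.le, le_rfl⟩ hvb
    simp only at this
    rw [hb1, div_lt_one hα0] at this
    linarith
  have hG := Gf_alg hv0.le (by linarith)
  have hnv := hn v (Ioo_subset_Icc_self hv)
  have hmv := hm v (Ioo_subset_Icc_self hv)
  have hidv := hid v hw
  rw [show α * (v * (3 - 4 * v) ^ 2 / α) = v * (3 - 4 * v) ^ 2 by field_simp, hG]
  set n := α - 3 * v + 48 * v ^ 2 - 64 * v ^ 3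
  set m := α - 48 * v ^ 2 + 128 * v ^ 3
  set q := α - v * (3 - 4 * v) ^ 2 with hqdef
  clear_value n m
  have A0 : 0 < √v := Real.sqrt_pos.2 hv0
  have A2 : √v ^ 2 = v := Real.sq_sqrt hv0.le
  have N0 : 0 < √n := Real.sqrt_pos.2 hnv
  have N2 : √n ^ 2 = n := Real.sq_sqrt hnv.le
  have Q0 : 0 < √q := Real.sqrt_pos.2 hq
  have Q2 : √q ^ 2 = q := Real.sq_sqrt hq.le
  have S0 : 0 < √α := Real.sqrt_pos.2 hα0
  have S2 : √α ^ 2 = α := Real.sq_sqrt hα0.le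
  have p1 : 0 < 3 - 4 * v := by linarith
  have p2 : 0 < 1 - 4 * v := by linarith
  have r1 : (v * (3 - 4 * v) ^ 2 / α) ^ (-((1:ℝ)/2)) = (√v * (3 - 4 * v) / √α)⁻¹ :=
    rpow_half (by positivity) (by rw [div_pow, mul_pow, A2, S2])
  have r2 : (1 - v * (3 - 4 * v) ^ 2 / α) ^ (-((1:ℝ)/2)) = (√q / √α)⁻¹ :=
    rpow_half (by positivity) (by rw [div_pow, Q2, S2, hqdef]; field_simp)
  have r3 : (k * v ^ 2 / n ^ 2) ^ (-((3:ℝ)/4)) = ((κ * √v / √n) ^ 3)⁻¹ :=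
    rpow_three_quarter (by positivity) (by
      rw [div_pow, mul_pow, hκ4, show √v ^ 4 = (√v ^ 2) ^ 2 by ring,
        show √n ^ 4 = (√n ^ 2) ^ 2 by ring, A2, N2])
  have r4 : (1 - k * v ^ 2 / n ^ 2) ^ (-((1:ℝ)/2)) = (m * √q / √n ^ 3)⁻¹ :=
    rpow_half (by positivity) (by
      rw [div_pow, mul_pow, Q2, show (√n ^ 3) ^ 2 = (√n ^ 2) ^ 3 by ring, N2]
      field_simp
      linear_combination - hidv)
  rw [r1, r2, r3, r4, ← hκ4]
  have e1 : (3 - 4 * v) * (3 - 12 * v) / α * ((√v * (3 - 4 * v) / √α)⁻¹ * (√q / √α)⁻¹ *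
      (1 / (1 - 4 * v))) = 3 / (√v * √q) := by
    rw [show 3 - 12 * v = 3 * (1 - 4 * v) by ring]
    nth_rewrite 1 [← S2]
    field_simp
  have e2 : 2 * κ ^ 4 * v * m / n ^ 3 * (((κ * √v / √n) ^ 3)⁻¹ * (m * √q / √n ^ 3)⁻¹) =
      2 * κ / (√v * √q) := by
    have : n ^ 3 = √n ^ 6 := by rw [show √n ^ 6 = (√n ^ 2) ^ 3 by ring, N2]
    rw [this]
    nth_rewrite 1 [← A2]
    field_simp
  rw [e1, e2]
  field_simp

lemma gamma_quarter : Real.Gamma (1/4) * Real.Gamma (1/2) / Real.Gamma (1/4 + 1/2) =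
    Real.Gamma (1/4) ^ 2 / (√2 * √π) := by
  have h := Real.Gamma_mul_Gamma_one_sub (1/4)
  rw [show π * (1/4) = π / 4 by ring, sin_pi_div_four] at h
  rw [show (1:ℝ)/4 + 1/2 = 1 - 1/4 by norm_num, Real.Gamma_one_half_eq]
  have g1 : 0 < Real.Gamma (1/4) := Real.Gamma_pos_of_pos (by norm_num)
  have g2 : 0 < Real.Gamma (1 - 1/4) := Real.Gamma_pos_of_pos (by norm_num)
  have s2 : √2 ^ 2 = (2:ℝ) := Real.sq_sqrt (by norm_num)
  have sp : √π ^ 2 = π := Real.sq_sqrt pi_pos.le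
  have h2 : 0 < √(2:ℝ) := by positivity
  have hp : 0 < √π := by have := pi_pos; positivity
  have h' : Real.Gamma (1/4) * Real.Gamma (1 - 1/4) = √2 * √π ^ 2 := by
    rw [h, sp]; field_simp; linear_combination -s2
  rw [div_eq_div_iff g2.ne' (by positivity)]
  linear_combination -Real.Gamma (1/4) * h'

lemma const_eq {κ : ℝ} (hκ : 0 < κ) (hκ4 : κ ^ 4 = 81 * (2 * √3 - 3)) :
    ((9 - 3 * √3) / 4) ^ ((1:ℝ)/3) * (3 / (2 * κ)) / √2 =
    (3:ℝ) ^ ((3:ℝ)/8) / ((2:ℝ) ^ ((1:ℝ)/12) * 4) * (√3 + 1) ^ ((1:ℝ)/6) := by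
  have hw : √3 ^ 2 = (3:ℝ) := Real.sq_sqrt (by norm_num)
  have hw0 : 0 ≤ √3 := Real.sqrt_nonneg 3
  have hw2 : √3 < (1.7321:ℝ) := by nlinarith
  have hw1 : (1.732:ℝ) < √3 := by nlinarith
  have hβ : 0 < (9 - 3 * √3) / 4 := by linarith
  have hroot : ∀ (x : ℝ) (y : ℝ) (n : ℕ), 0 ≤ x → y * 24 = n → (x ^ y) ^ 24 = x ^ n := by
    intro x y n hx h
    rw [← Real.rpow_natCast (x ^ y), ← Real.rpow_mul hx, ← Real.rpow_natCast x n, ← h]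
    norm_num
  have h1 := hroot ((9 - 3 * √3) / 4) (1/3) 8 hβ.le (by norm_num)
  have h2 := hroot 3 (3/8) 9 (by norm_num) (by norm_num)
  have h3 := hroot 2 (1/12) 2 (by norm_num) (by norm_num)
  have h4 := hroot (√3 + 1) (1/6) 4 (by linarith) (by norm_num)
  have h5 : √2 ^ 24 = (2:ℝ) ^ 12 := by
    rw [show √(2:ℝ) ^ 24 = (√2 ^ 2) ^ 12 by ring, Real.sq_sqrt (by norm_num)]
  have h6 : κ ^ 24 = (81 * (2 * √3 - 3)) ^ 6 := by rw [← hκ4]; ring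
  rw [← pow_left_inj₀ (n := 24) (by positivity) (by positivity) (by norm_num)]
  simp only [div_pow, mul_pow, h1, h2, h3, h4, h5, h6]
  set w := √(3:ℝ)
  clear_value w
  have hu : (7 - 4 * w) * (7 + 4 * w) = 1 := by linear_combination -16 * hw
  have hu0 : 7 - 4 * w ≠ 0 := left_ne_zero_of_mul_eq_one hu
  have i2 : (2 * w - 3) ^ 6 = 27 * (7 - 4 * w) ^ 3 := by
    rw [show (2 * w - 3) ^ 6 = ((2 * w - 3) ^ 2) ^ 3 by ring,
      show (2 * w - 3) ^ 2 = 3 * (7 - 4 * w) by linear_combination 4 * hw]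
    ring
  have i1 : (9 - 3 * w) ^ 8 = 3 ^ 8 * 6 ^ 4 * (7 - 4 * w) ^ 2 := by
    rw [show (9 - 3 * w) ^ 8 = 3 ^ 8 * (((3 - w) ^ 2) ^ 2) ^ 2 by ring,
      show (3 - w) ^ 2 = 12 - 6 * w by linear_combination hw,
      show (12 - 6 * w) ^ 2 = 36 * (7 - 4 * w) by linear_combination 36 * hw]
    ring
  have i3 : (w + 1) ^ 4 = 4 * (7 + 4 * w) := by
    rw [show (w + 1) ^ 4 = ((w + 1) ^ 2) ^ 2 by ring,
      show (w + 1) ^ 2 = 4 + 2 * w by linear_combination hw]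
    linear_combination 4 * hw
  have i4 : 7 + 4 * w = (7 - 4 * w)⁻¹ := by
    exact eq_inv_of_mul_eq_one_right hu
  rw [i1, i2, i3, i4]
  generalize 7 - 4 * w = u at hu0
  field_simp
  norm_num

/-- Pfaff-transformed evaluation. -/
theorem pfaff_transformed_evaluation :
    hyp2F1 (1/3) (1/3) 1 ((Real.sqrt 3 - 2) / (3 * Real.sqrt 3)) =
      (3:ℝ) ^ ((3:ℝ)/8) / ((2:ℝ) ^ ((1:ℝ)/12) * 4 * π ^ ((3:ℝ)/2)) *
        (Real.sqrt 3 + 1) ^ ((1:ℝ)/6) * Real.Gamma (1/4) ^ 2 := by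
  have hw : √3 ^ 2 = (3:ℝ) := Real.sq_sqrt (by norm_num)
  have hw0 : 0 ≤ √3 := Real.sqrt_nonneg 3
  have hw2 : √3 < (1.7321:ℝ) := by nlinarith
  have hw1 : (1.732:ℝ) < √3 := by nlinarith
  have hα : |(3 * √3 - 5) / 4| < 1 := by rw [abs_lt]; constructor <;> linarith
  have hz : |(√3 - 2) / (3 * √3)| < 1 := by
    rw [abs_lt, lt_div_iff₀ (by linarith), div_lt_iff₀ (by linarith)]
    constructor <;> linarith
  have hk : (0:ℝ) < 81 * (2 * √3 - 3) := by linarith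
  obtain ⟨κ, hκ, hκ4⟩ : ∃ κ : ℝ, 0 < κ ∧ κ ^ 4 = 81 * (2 * √3 - 3) := by
    refine ⟨(81 * (2 * √3 - 3)) ^ ((1:ℝ)/4), by positivity, ?_⟩
    rw [← Real.rpow_natCast, ← Real.rpow_mul hk.le]; norm_num
  rw [pfaff_third hz hα (by field_simp; linear_combination (-6 : ℝ) * hw)]
  have h1 := hyp_eq_int hα
  rw [int_eq hκ hκ4] at h1
  have h2 := (beta_int (a := 1/4) (b := 1/2) (by norm_num) (by norm_num)).2
  rw [show (1:ℝ)/4 - 1 = -(3/4) by norm_num, show (1:ℝ)/2 - 1 = -(1/2) by norm_num,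
    gamma_quarter] at h2
  rw [h2] at h1
  have hc := const_eq hκ hκ4
  have hpi : π ^ ((3:ℝ)/2) = π * √π := by
    rw [show (3:ℝ)/2 = 1 + 1/2 by norm_num, Real.rpow_add pi_pos, Real.rpow_one, Real.sqrt_eq_rpow]
  have hp : 0 < √π := by have := pi_pos; positivity
  have hF : hyp2F1 (1/3) (2/3) 1 ((3 * √3 - 5) / 4) =
      3 / (2 * κ) * (Real.Gamma (1/4) ^ 2 / (√2 * √π)) / π := by
    rw [eq_div_iff pi_pos.ne', mul_comm, h1]
  rw [hF, hpi, show 1 - (3 * √3 - 5) / 4 = (9 - 3 * √3) / 4 by ring]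
  calc _ = (((9 - 3 * √3) / 4) ^ ((1:ℝ)/3) * (3 / (2 * κ)) / √2) *
        (Real.Gamma (1/4) ^ 2 / (π * √π)) := by field_simp
    _ = _ := by rw [hc]; field_simp
end

section
/- (Ratio of ₂F₁(1/3,1/3;1;·) at conjugate arguments.) One has ₂F₁(1/3, 1/3; 1; (√3 + 2)/(3√3)) = 2^{1/3} · (√3 − 1)^{1/3} · ₂F₁(1/3, 1/3; 1; (√3 − 2)/(3√3)). (Both arguments lie in (−1,1), so both hypergeometric series converge absolutely.) -/
open Real

lemma ps_summable (a : ℕ → ℝ) (C : ℝ) (k : ℕ) (ha : ∀ n, |a n| ≤ C * ((n:ℝ) + 1) ^ k)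
    (r : ℝ) (hr0 : 0 < r) (hr1 : r < 1) :
    Summable (fun n : ℕ => C * ((n:ℝ) + 1) ^ k * r ^ n) := by
  have h := summable_pow_mul_geometric_of_norm_lt_one (R := ℝ) k (r := r)
    (by rw [Real.norm_eq_abs, abs_of_pos hr0]; exact hr1)
  have h2 := ((summable_nat_add_iff 1).2 h).mul_left (C / r)
  refine h2.congr fun n => ?_
  push_cast
  field_simp
  ring

lemma ps_hasSum (a : ℕ → ℝ) (C : ℝ) (k : ℕ) (ha : ∀ n, |a n| ≤ C * ((n:ℝ) + 1) ^ k)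
    (z : ℝ) (hz : |z| < 1) : Summable (fun n : ℕ => a n * z ^ n) := by
  have h0 := abs_nonneg z
  refine Summable.of_norm_bounded (ps_summable a C k ha ((|z| + 1) / 2) (by linarith)
    (by linarith)) fun n => ?_
  rw [Real.norm_eq_abs, abs_mul, abs_pow]
  have hp : |z| ^ n ≤ ((|z| + 1) / 2) ^ n := by gcongr; linarith
  exact mul_le_mul (ha n) hp (by positivity) ((abs_nonneg _).trans (ha n))

lemma ps_hasDerivAt (a : ℕ → ℝ) (C : ℝ) (k : ℕ) (ha : ∀ n, |a n| ≤ C * ((n:ℝ) + 1) ^ k)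
    (z : ℝ) (hz : |z| < 1) :
    HasDerivAt (fun x => ∑' n : ℕ, a n * x ^ n)
      (∑' n : ℕ, (((n:ℝ) + 1) * a (n + 1)) * z ^ n) z := by
  have h0 := abs_nonneg z
  obtain ⟨r, hr⟩ : ∃ r, r = (|z| + 1) / 2 := ⟨_, rfl⟩
  have hr0 : 0 < r := by linarith
  have hr1 : r < 1 := by linarith
  have hzr : |z| < r := by linarith
  have hC : 0 ≤ C := by
    have := (abs_nonneg _).trans (ha 0)
    simpa using this
  have hs := (ps_summable a C (k+1) (fun n => (ha n).trans (by
    gcongr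
    · linarith [Nat.cast_nonneg (α := ℝ) n]
    · omega)) r hr0 hr1).mul_left (1 / r)
  have key := hasDerivAt_tsum_of_isPreconnected (𝕜 := ℝ) (F := ℝ)
    (g := fun n x => a n * x ^ n) (g' := fun n x => a n * ((n:ℝ) * x ^ (n - 1)))
    (t := Metric.ball 0 r) (y₀ := 0) (y := z) hs Metric.isOpen_ball
    (convex_ball 0 r).isPreconnected
    (fun n y _ => (hasDerivAt_pow n y).const_mul (a n))
    (fun n y hy => by
      have hy' : |y| < r := by simpa using hy
      have e : (1 / r) * (C * ((n:ℝ) + 1) ^ (k + 1) * r ^ n)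
          = (C * ((n:ℝ) + 1) ^ k) * (((n:ℝ) + 1) * (r ^ n / r)) := by ring
      rw [e, Real.norm_eq_abs, abs_mul, abs_mul, abs_pow, Nat.abs_cast]
      apply mul_le_mul (ha n) _ (by positivity) ((abs_nonneg _).trans (ha n))
      rcases n with _ | m
      · simp; positivity
      · have : r ^ (m + 1) / r = r ^ m := by field_simp; ring
        rw [this]
        simp only [Nat.add_sub_cancel]
        gcongr
        linarith)
    (by simpa using hr0) (ps_hasSum a C k ha 0 (by simp)) (by simpa using hzr)
  refine HasDerivAt.congr_deriv key ?_
  have hsum : Summable (fun n : ℕ => a n * ((n:ℝ) * z ^ (n - 1))) := by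
    refine (summable_nat_add_iff 1).1 ?_
    have := ps_hasSum (fun n => ((n:ℝ) + 1) * a (n + 1)) (C * 2 ^ k) (k + 1) (fun n => by
      rw [abs_mul, abs_of_nonneg (by positivity : (0:ℝ) ≤ (n:ℝ) + 1)]
      have h1 := ha (n + 1)
      push_cast at h1
      have h2 : ((n:ℝ) + 1 + 1) ^ k ≤ (2 * ((n:ℝ) + 1)) ^ k := by
        gcongr
        linarith [Nat.cast_nonneg (α := ℝ) n]
      calc ((n:ℝ) + 1) * |a (n+1)| ≤ ((n:ℝ) + 1) * (C * (2 * ((n:ℝ) + 1)) ^ k) := by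
            gcongr
            exact h1.trans (by gcongr)
        _ = _ := by rw [mul_pow]; ring) z hz
    refine this.congr fun n => ?_
    simp only [Nat.add_sub_cancel]
    push_cast
    ring
  change ∑' n : ℕ, a n * ((n:ℝ) * z ^ (n - 1)) = _
  rw [hsum.tsum_eq_zero_add]
  simp only [Nat.cast_zero, zero_mul, mul_zero, zero_add, Nat.add_sub_cancel]
  refine tsum_congr fun n => ?_
  push_cast
  ring

/-- multiplying the derived series by z -/
lemma ps_shift (b : ℕ → ℝ) (z : ℝ)
    (h : Summable (fun n : ℕ => (((n:ℝ) + 1) * b (n + 1)) * z ^ n)) :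
    HasSum (fun n : ℕ => ((n:ℝ) * b n) * z ^ n)
      (z * ∑' n : ℕ, (((n:ℝ) + 1) * b (n + 1)) * z ^ n) := by
  rw [← hasSum_nat_add_iff' 1]
  simp only [Finset.range_one, Finset.sum_singleton, Nat.cast_zero, zero_mul, sub_zero]
  refine (h.hasSum.mul_left z).congr_fun ?_ |> id
  intro n
  push_cast
  ring

noncomputable def ca (n : ℕ) : ℝ :=
  (ascPochhammer ℝ n).eval (1/3) * (ascPochhammer ℝ n).eval (1/3) /
      (ascPochhammer ℝ n).eval 1 / (Nat.factorial n)

lemma ca_succ (n : ℕ) : ((n:ℝ) + 1) ^ 2 * ca (n + 1) = ((n:ℝ) + 1/3) ^ 2 * ca n := by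
  unfold ca
  have h := Nat.factorial_pos n
  have h' : (0:ℝ) < (n.factorial : ℝ) := by exact_mod_cast h
  rw [ascPochhammer_eval_one, ascPochhammer_eval_one, ascPochhammer_succ_eval,
    Nat.factorial_succ]
  push_cast
  field_simp
  ring

lemma ca_zero : ca 0 = 1 := by simp [ca]

lemma ca_nonneg (n : ℕ) : 0 ≤ ca n := by
  induction n with
  | zero => simp [ca_zero]
  | succ n ih =>
    have h := ca_succ n
    have h1 : (0:ℝ) < ((n:ℝ) + 1) ^ 2 := by positivity
    have h2 : 0 ≤ ((n:ℝ) + 1/3) ^ 2 * ca n := by positivity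
    rw [← h] at h2
    exact nonneg_of_mul_nonneg_right h2 h1

lemma ca_le (n : ℕ) : ca n ≤ 1 := by
  induction n with
  | zero => simp [ca_zero]
  | succ n ih =>
    have h := ca_succ n
    have h1 : (0:ℝ) < ((n:ℝ) + 1) ^ 2 := by positivity
    have h2 : ((n:ℝ) + 1/3) ^ 2 * ca n ≤ ((n:ℝ) + 1) ^ 2 * 1 := by
      apply mul_le_mul _ ih (ca_nonneg n) (by positivity)
      gcongr
      norm_num
    rw [← h] at h2
    exact le_of_mul_le_mul_left h2 h1

noncomputable def F0 (z : ℝ) : ℝ := ∑' n : ℕ, ca n * z ^ n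
noncomputable def cb (n : ℕ) : ℝ := ((n:ℝ) + 1) * ca (n + 1)
noncomputable def F1 (z : ℝ) : ℝ := ∑' n : ℕ, cb n * z ^ n
noncomputable def F2 (z : ℝ) : ℝ := ∑' n : ℕ, (((n:ℝ) + 1) * cb (n + 1)) * z ^ n

lemma ca_bd (n : ℕ) : |ca n| ≤ 1 * ((n:ℝ) + 1) ^ 0 := by
  rw [abs_of_nonneg (ca_nonneg n)]; simpa using ca_le n

lemma cb_bd (n : ℕ) : |cb n| ≤ 1 * ((n:ℝ) + 1) ^ 1 := by
  have h1 := ca_nonneg (n + 1)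
  have h2 := ca_le (n + 1)
  unfold cb
  rw [abs_of_nonneg (by positivity)]
  have : (0:ℝ) ≤ (n:ℝ) := by positivity
  nlinarith

lemma cc_bd (n : ℕ) : |((n:ℝ) + 1) * cb (n + 1)| ≤ 2 * ((n:ℝ) + 1) ^ 2 := by
  have h := cb_bd (n + 1)
  have : (0:ℝ) ≤ (n:ℝ) := by positivity
  rw [abs_mul, abs_of_nonneg (by positivity : (0:ℝ) ≤ (n:ℝ) + 1)]
  push_cast at h
  nlinarith

lemma F0_deriv (z : ℝ) (hz : |z| < 1) : HasDerivAt F0 (F1 z) z :=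
  ps_hasDerivAt ca 1 0 ca_bd z hz

lemma F1_deriv (z : ℝ) (hz : |z| < 1) : HasDerivAt F1 (F2 z) z :=
  ps_hasDerivAt cb 1 1 cb_bd z hz

lemma F_ode (z : ℝ) (hz : |z| < 1) :
    z * (1 - z) * F2 z + (1 - 5/3 * z) * F1 z - 1/9 * F0 z = 0 := by
  have s0 : HasSum (fun n => ca n * z ^ n) (F0 z) := (ps_hasSum ca 1 0 ca_bd z hz).hasSum
  have s1 : HasSum (fun n => cb n * z ^ n) (F1 z) := (ps_hasSum cb 1 1 cb_bd z hz).hasSum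
  have s2 := ps_hasSum (fun n => ((n:ℝ) + 1) * cb (n + 1)) 2 2 cc_bd z hz
  have t1 : HasSum (fun n : ℕ => ((n:ℝ) * ca n) * z ^ n) (z * F1 z) :=
    ps_shift ca z s1.summable
  have t2 : HasSum (fun n : ℕ => ((n:ℝ) * cb n) * z ^ n) (z * F2 z) := ps_shift cb z s2
  have t3 : HasSum (fun n : ℕ => ((n:ℝ) * (((n:ℝ) - 1) * ca n)) * z ^ n)
      (z * (z * F2 z)) := by
    have e : ∀ n : ℕ, ((n:ℝ) + 1) * ((((n + 1 : ℕ):ℝ) - 1) * ca (n + 1)) * z ^ n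
        = (n:ℝ) * cb n * z ^ n := by
      intro n; unfold cb; push_cast; ring
    have := ps_shift (fun n => ((n:ℝ) - 1) * ca n) z (t2.summable.congr fun n => (e n).symm)
    rw [tsum_congr e, t2.tsum_eq] at this
    exact this
  have tot := (((t2.add s1).sub t3).sub (t1.mul_left (5/3))).sub (s0.mul_left (1/9))
  have hz0 : HasSum (fun _ : ℕ => (0:ℝ)) 0 := hasSum_zero
  have := tot.unique (hz0.congr_fun (fun n => by
    have := ca_succ n
    unfold cb
    linear_combination z ^ n * this) |> id)
  linear_combination this

lemma F0_pos (z : ℝ) (h0 : 0 ≤ z) (hz : z < 1) : 0 < F0 z := by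
  have hs := ps_hasSum ca 1 0 ca_bd z (by rwa [abs_of_nonneg h0])
  refine hs.tsum_pos (fun n => mul_nonneg (ca_nonneg n) (by positivity)) 0 ?_
  simp [ca_zero]

lemma F0_zero : F0 0 = 1 := by
  unfold F0
  rw [tsum_eq_single 0]
  · simp [ca_zero]
  · intro n hn; simp [hn]

noncomputable def zz (p : ℝ) : ℝ := -(p * (3 + p) ^ 2) / ((1 - p) ^ 2 * (p + 2))
noncomputable def ww (p : ℝ) : ℝ := -(p ^ 2 * (3 + p)) / ((1 - p) * (p + 2) ^ 2)
noncomputable def mm (p : ℝ) : ℝ := (2 * (1 - p) / (p + 2)) ^ ((1:ℝ)/3)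

lemma zz_deriv (p : ℝ) (h1 : 1 - p ≠ 0) (h2 : p + 2 ≠ 0) :
    HasDerivAt zz (-(6 * (1 + p) ^ 2 * (3 + p)) / ((1 - p) ^ 3 * (p + 2) ^ 2)) p := by
  have i := hasDerivAt_id' p
  have := ((i.mul ((i.const_add 3).pow 2)).neg).div
    (((i.const_sub 1).pow 2).mul (i.add_const 2)) (by simp [h1, h2])
  refine HasDerivAt.congr_deriv this ?_
  simp only [Pi.mul_apply, Pi.div_apply, Pi.neg_apply, Pi.pow_apply, Pi.add_apply]
  field_simp
  ring

lemma ww_deriv (p : ℝ) (h1 : 1 - p ≠ 0) (h2 : p + 2 ≠ 0) :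
    HasDerivAt ww (-(12 * p) / ((1 - p) ^ 2 * (p + 2) ^ 3)) p := by
  have i := hasDerivAt_id' p
  have := (((i.pow 2).mul (i.const_add 3)).neg).div
    ((i.const_sub 1).mul ((i.add_const 2).pow 2)) (by simp [h1, h2])
  refine HasDerivAt.congr_deriv this ?_
  simp only [Pi.mul_apply, Pi.div_apply, Pi.neg_apply, Pi.pow_apply, Pi.add_apply]
  field_simp
  ring

lemma mm_deriv (p : ℝ) (h1 : 0 < 1 - p) (h2 : 0 < p + 2) :
    HasDerivAt mm (mm p * (-1 / ((1 - p) * (p + 2)))) p := by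
  have i := hasDerivAt_id' p
  have hpos : 0 < 2 * (1 - p) / (p + 2) := by positivity
  have h := (((i.const_sub 1).const_mul 2).div (i.add_const 2) h2.ne')
  have := h.rpow_const (p := (1:ℝ)/3) (Or.inl hpos.ne')
  refine HasDerivAt.congr_deriv this ?_
  unfold mm
  simp only [Pi.div_apply]
  rw [Real.rpow_sub_one hpos.ne']
  field_simp
  ring

noncomputable def WW (p : ℝ) : ℝ :=
  (-(6 * p * (1 + p) ^ 2 * (3 + p) ^ 2) / ((1 - p) ^ 3 * (p + 2) ^ 2)) *
      (F1 (zz p) * F0 (ww p))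
    - F0 (zz p) * ((-(p * (3 + p)) / ((1 - p) * (p + 2))) * F0 (ww p)
      + (-(12 * p ^ 2 * (3 + p)) / ((1 - p) ^ 2 * (p + 2) ^ 3)) * F1 (ww p))

lemma WW_deriv (p : ℝ) (h1 : 0 < 1 - p) (h2 : 0 < p + 2)
    (hz : |zz p| < 1) (hw : |ww p| < 1) : HasDerivAt WW 0 p := by
  have i := hasDerivAt_id' p
  have n1 := h1.ne'
  have n2 := h2.ne'
  have dz := zz_deriv p n1 n2
  have dw := ww_deriv p n1 n2
  have B0 := (F0_deriv _ hz).comp p dz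
  have B1 := (F1_deriv _ hz).comp p dz
  have A0 := (F0_deriv _ hw).comp p dw
  have A1 := (F1_deriv _ hw).comp p dw
  have oz := F_ode _ hz
  have ow := F_ode _ hw
  have c1 := ((((i.const_mul 6).mul ((i.const_add 1).pow 2)).mul ((i.const_add 3).pow 2)).neg).div
    (((i.const_sub 1).pow 3).mul ((i.add_const 2).pow 2)) (by simp [n1, n2])
  have c2 := ((i.mul (i.const_add 3)).neg).div
    ((i.const_sub 1).mul (i.add_const 2)) (by simp [n1, n2])
  have c3 := ((((i.pow 2).const_mul 12).mul (i.const_add 3)).neg).div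
    (((i.const_sub 1).pow 2).mul ((i.add_const 2).pow 3)) (by simp [n1, n2])
  have tot := (c1.mul (B1.mul A0)).sub (B0.mul ((c2.mul A0).add (c3.mul A1)))
  refine HasDerivAt.congr_deriv (f := WW) tot ?_
  simp only [Function.comp, Pi.mul_apply, Pi.div_apply, Pi.neg_apply, Pi.pow_apply, Pi.add_apply]
  generalize F0 (zz p) = b0 at *
  generalize F1 (zz p) = b1 at *
  generalize F2 (zz p) = b2 at *
  generalize F0 (ww p) = a0 at *
  generalize F1 (ww p) = a1 at *
  generalize F2 (ww p) = a2 at *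
  unfold zz at oz
  unfold ww at ow
  have q1 : (2 + p) ≠ 0 := by rwa [add_comm]
  linear_combination (norm := (field_simp; ring)) (-(18 * (1 + p) * (3 + p)) / ((1 - p) ^ 2 * (p + 2) ^ 2)) * a0 * oz
    - (-(36 * p) / ((1 - p) ^ 2 * (p + 2) ^ 2)) * b0 * ow

/-- Ratio of ₂F₁(1/3,1/3;1;·) at conjugate arguments. -/
theorem conjugate_argument_ratio :
    hyp2F1 (1/3) (1/3) 1 ((Real.sqrt 3 + 2) / (3 * Real.sqrt 3)) =
      (2:ℝ) ^ ((1:ℝ)/3) * (Real.sqrt 3 - 1) ^ ((1:ℝ)/3) *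
        hyp2F1 (1/3) (1/3) 1 ((Real.sqrt 3 - 2) / (3 * Real.sqrt 3)) := by
  have hF : ∀ z, hyp2F1 (1/3) (1/3) 1 z = F0 z := by
    intro z
    unfold hyp2F1 F0 ca
    refine tsum_congr fun n => ?_
    ring
  obtain ⟨s, hs⟩ : ∃ s, s = Real.sqrt 3 := ⟨_, rfl⟩
  have hs2 : s ^ 2 = 3 := by rw [hs]; norm_num
  have hs0 : 0 ≤ s := by rw [hs]; positivity
  have hs1 : 1.732 < s := by nlinarith
  have hs3 : s < 1.7321 := by nlinarith
  have bz : ∀ p ∈ Set.Icc (s - 2) 0, 0 ≤ zz p ∧ zz p < 1 := by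
    intro p hp
    have h1 := hp.1
    have h2 := hp.2
    have hd : 0 < (1 - p) ^ 2 * (p + 2) := by
      have : 0 < 1 - p := by linarith
      have : 0 < p + 2 := by linarith
      positivity
    unfold zz
    constructor
    · apply div_nonneg _ hd.le
      nlinarith [sq_nonneg (3 + p)]
    · rw [div_lt_one hd]
      have : 0 < (1 + p) ^ 3 := pow_pos (by linarith) 3
      nlinarith
  have bw : ∀ p ∈ Set.Icc (s - 2) 0, |ww p| < 1 := by
    intro p hp
    have h1 := hp.1
    have h2 := hp.2
    have k1 : 0 < 1 - p := by linarith
    have k2 : 0 < p + 2 := by linarith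
    have k3 : 0 < 3 + p := by linarith
    have hd : 0 < (1 - p) * (p + 2) ^ 2 := by positivity
    unfold ww
    rw [neg_div, abs_neg, abs_of_nonneg (by positivity), div_lt_one hd]
    have : p ^ 2 ≤ 0.1 := by nlinarith
    nlinarith
  have dW : ∀ p ∈ Set.Icc (s - 2) 0, HasDerivAt WW 0 p := by
    intro p hp
    have h1 := hp.1
    have h2 := hp.2
    have := bz p hp
    exact WW_deriv p (by linarith) (by linarith)
      (by rw [abs_of_nonneg this.1]; exact this.2) (bw p hp)
  have W0 : WW 0 = 0 := by simp [WW]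
  have cW : ∀ p ∈ Set.Icc (s - 2) 0, WW p = 0 := by
    intro p hp
    have := constant_of_has_deriv_right_zero (f := WW) (a := s - 2) (b := 0)
      (fun x hx => (dW x hx).continuousAt.continuousWithinAt)
      (fun x hx => (dW x ⟨hx.1, hx.2.le⟩).hasDerivWithinAt)
    rw [this p hp, ← this 0 ⟨by linarith, le_rfl⟩, W0]
  have dQ : ∀ p ∈ Set.Icc (s - 2) 0, HasDerivAt (fun p => mm p * F0 (ww p) / F0 (zz p))
      ((((mm p * (-1 / ((1 - p) * (p + 2)))) * F0 (ww p)
        + mm p * (F1 (ww p) * (-(12 * p) / ((1 - p) ^ 2 * (p + 2) ^ 3)))) * F0 (zz p)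
        - mm p * F0 (ww p) *
          (F1 (zz p) * (-(6 * (1 + p) ^ 2 * (3 + p)) / ((1 - p) ^ 3 * (p + 2) ^ 2))))
        / F0 (zz p) ^ 2) p := by
    intro p hp
    have h1 : 0 < 1 - p := by linarith [hp.2]
    have h2 : 0 < p + 2 := by linarith [hp.1]
    have b := bz p hp
    have B0 := (F0_deriv (zz p) (by rw [abs_of_nonneg b.1]; exact b.2)).comp p
      (zz_deriv p h1.ne' h2.ne')
    have A0 := (F0_deriv (ww p) (bw p hp)).comp p (ww_deriv p h1.ne' h2.ne')
    exact ((mm_deriv p h1 h2).mul A0).div B0 (F0_pos _ b.1 b.2).ne'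
  have cQ := constant_of_has_deriv_right_zero
    (f := fun p => mm p * F0 (ww p) / F0 (zz p)) (a := s - 2) (b := 0)
      (fun x hx => (dQ x hx).continuousAt.continuousWithinAt)
      (fun x hx => by
        have hx' : x ∈ Set.Icc (s - 2) 0 := ⟨hx.1, hx.2.le⟩
        refine ((dQ x hx').congr_deriv ?_).hasDerivWithinAt
        have hW := cW x hx'
        have h1 : 1 - x ≠ 0 := by linarith [hx.2]
        have h2 : x + 2 ≠ 0 := by linarith [hx.1]
        have h3 : x * (3 + x) ≠ 0 := mul_ne_zero hx.2.ne (by linarith [hx.1])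
        rw [div_eq_zero_iff]
        left
        apply mul_left_cancel₀ h3
        unfold WW at hW
        linear_combination (-mm x) * hW)
  have h0 := cQ 0 ⟨by linarith, le_rfl⟩
  have m0 : mm 0 = 1 := by simp [mm]
  have z0 : zz 0 = 0 := by simp [zz]
  have w0 : ww 0 = 0 := by simp [ww]
  simp only [m0, z0, w0, F0_zero] at h0
  have b := bz (s - 2) ⟨le_rfl, by linarith⟩
  have hp := F0_pos _ b.1 b.2
  have key : F0 (zz (s - 2)) = mm (s - 2) * F0 (ww (s - 2)) := by
    field_simp at h0
    linarith
  have hsne : s ≠ 0 := by linarith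
  have ez : zz (s - 2) = (s + 2) / (3 * s) := by
    unfold zz
    have : (1 - (s - 2)) ≠ 0 := by linarith
    have h2 : s - 2 + 2 = s := by ring
    rw [h2, div_eq_div_iff (by positivity) (by positivity)]
    have h3 : s ^ 3 = 3 * s := by rw [pow_succ, hs2]
    have h4 : s ^ 4 = 9 := by rw [show s ^ 4 = (s ^ 2) ^ 2 by ring, hs2]; norm_num
    ring_nf
    rw [hs2, h3, h4]
    ring
  have ew : ww (s - 2) = (s - 2) / (3 * s) := by
    unfold ww
    have : (1 - (s - 2)) ≠ 0 := by linarith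
    have h2 : s - 2 + 2 = s := by ring
    rw [h2, div_eq_div_iff (by positivity) (by positivity)]
    have h3 : s ^ 3 = 3 * s := by rw [pow_succ, hs2]
    have h4 : s ^ 4 = 9 := by rw [show s ^ 4 = (s ^ 2) ^ 2 by ring, hs2]; norm_num
    ring_nf
    rw [hs2, h3, h4]
    ring
  have em : mm (s - 2) = 2 ^ ((1:ℝ)/3) * (s - 1) ^ ((1:ℝ)/3) := by
    rw [← Real.mul_rpow (by norm_num) (by linarith)]
    unfold mm
    congr 1
    have h2 : s - 2 + 2 = s := by ring
    rw [h2, div_eq_iff hsne]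
    linear_combination (-2) * hs2
  rw [hF, hF, ← hs, ← ez, ← ew, ← em]
  exact key
end
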